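/- There exists a constant C > 0, depending only on Ω, ω₀, ω and η⁰, such that for every T > 0, every bounded measurable potential a, and every classical nonnegative solution q of the adjoint heat equation with Neumann boundary condition, one has ∫_Ω q(0,x)² dx ≤ exp(C(1 + 1/T + T‖a‖_∞ + ‖a‖_∞^{1/2})) (∫₀^T ∫_ω q(t,x) dx dt)². -/

import Mathlib

open MeasureTheory Real Set RealInnerProductSpace

noncomputable def spaceLaplacian {N : ℕ} (f : EuclideanSpace ℝ (Fin N) → ℝ)
    (x : EuclideanSpace ℝ (Fin N)) : ℝ :=
  ∑ i : Fin N, fderiv ℝ (fun y => fderiv ℝ f y (EuclideanSpace.single i 1)) x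
    (EuclideanSpace.single i 1)

namespace Obs
open Filter Topology

instance instCA (N : ℕ) : ContinuousAdd
    (EuclideanSpace ℝ (Fin N) →L[ℝ] EuclideanSpace ℝ (Fin N) →L[ℝ] ℝ) :=
  ContinuousLinearMap.topologicalAddGroup.toContinuousAdd

/-- trace of a bilinear form in the standard basis -/
noncomputable def tr {N : ℕ} (H : EuclideanSpace ℝ (Fin N) →L[ℝ] EuclideanSpace ℝ (Fin N) →L[ℝ] ℝ) : ℝ :=
  ∑ i : Fin N, H (EuclideanSpace.single i 1) (EuclideanSpace.single i 1)

/-- dot product of two covectors -/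
noncomputable def dt {N : ℕ} (f g : EuclideanSpace ℝ (Fin N) →L[ℝ] ℝ) : ℝ :=
  ∑ i : Fin N, f (EuclideanSpace.single i 1) * g (EuclideanSpace.single i 1)

lemma dt_eq {N : ℕ} (η : EuclideanSpace ℝ (Fin N) → ℝ) (x : EuclideanSpace ℝ (Fin N))
    (g : EuclideanSpace ℝ (Fin N) →L[ℝ] ℝ) : dt (fderiv ℝ η x) g = g (gradient η x) := by
  have h : gradient η x = ∑ i, (fderiv ℝ η x (EuclideanSpace.single i 1)) • EuclideanSpace.single i (1:ℝ) := by
    ext j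
    have h1 : ⟪gradient η x, EuclideanSpace.single j (1:ℝ)⟫ = fderiv ℝ η x (EuclideanSpace.single j 1) := by
      unfold gradient; simp only [InnerProductSpace.toDual_symm_apply]
    rw [EuclideanSpace.inner_single_right] at h1
    simp [← h1, Pi.single_apply]
  rw [h, map_sum]
  simp [dt]

lemma dt_self {N : ℕ} (g : EuclideanSpace ℝ (Fin N) →L[ℝ] ℝ) : dt g g = ‖g‖ ^ 2 := by
  have h1 : fderiv ℝ (fun y => g y) 0 = g := g.fderiv
  have h2 := dt_eq (fun y => g y) 0 g
  rw [h1] at h2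
  rw [h2]
  have h3 : ⟪gradient (fun y => g y) 0, gradient (fun y => g y) 0⟫ = g (gradient (fun y => g y) 0) := by
    conv_lhs => arg 2; unfold gradient
    rw [InnerProductSpace.toDual_symm_apply, h1]
  rw [← h3, real_inner_self_eq_norm_sq]
  unfold gradient
  rw [LinearIsometryEquiv.norm_map, h1]

structure Geo {N : ℕ} (Ω : Set (EuclideanSpace ℝ (Fin N))) (η : EuclideanSpace ℝ (Fin N) → ℝ) : Prop where
  op : IsOpen Ω
  bd : Bornology.IsBounded Ω
  sm : ContDiff ℝ 2 η
  pos : ∀ x ∈ Ω, 0 < η x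
  zero : ∀ x ∈ frontier Ω, η x = 0
  gr : ∀ x ∈ frontier Ω, 0 < ‖gradient η x‖

variable {N : ℕ} {Ω : Set (EuclideanSpace ℝ (Fin N))} {η : EuclideanSpace ℝ (Fin N) → ℝ}

lemma Geo.cpt (G : Geo Ω η) : IsCompact (closure Ω) := G.bd.isCompact_closure

lemma Geo.mem_of_pos (G : Geo Ω η) {x} (hx : x ∈ closure Ω) (h : 0 < η x) : x ∈ Ω := by
  by_contra hn
  have : x ∈ frontier Ω := ⟨hx, by rwa [G.op.interior_eq]⟩
  rw [G.zero x this] at h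
  exact lt_irrefl _ h

lemma Geo.vol (G : Geo Ω η) : volume Ω < ⊤ := G.bd.measure_lt_top

lemma Geo.intOn (G : Geo Ω η) {f : EuclideanSpace ℝ (Fin N) → ℝ} (hf : ContinuousOn f (closure Ω)) :
    IntegrableOn f Ω :=
  (hf.integrableOn_compact G.cpt).mono_set subset_closure

lemma exists_cutoff (G : Geo Ω η) {ε : ℝ} (hε : 0 < ε) :
    ∃ (ρ : EuclideanSpace ℝ (Fin N) → ℝ) (k : EuclideanSpace ℝ (Fin N) → ℝ),
      (∀ x, HasFDerivAt ρ (k x • fderiv ℝ η x) x) ∧ (∀ x, 0 ≤ ρ x ∧ ρ x ≤ 1) ∧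
      (∀ x ∈ Ω, 2 * ε ≤ η x → ρ x = 1) ∧ (∀ x, 0 ≤ k x) ∧ (∀ x, 2 * ε < η x → k x = 0) ∧
      (∃ K ⊆ Ω, IsCompact K ∧ (∀ x ∉ K, ρ x = 0 ∧ k x = 0) ∧ ContinuousOn k K) := by
  classical
  set K := closure Ω ∩ {x | ε ≤ η x} with hK
  have hc : Continuous η := G.sm.continuous
  have hKc : IsCompact K := G.cpt.inter_right (isClosed_le continuous_const hc)
  have hKΩ : K ⊆ Ω := fun x hx => G.mem_of_pos hx.1 (hε.trans_le hx.2)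
  have hst : ContDiff ℝ 1 Real.smoothTransition := Real.smoothTransition.contDiff (n := 1)
  have hdst : Continuous (deriv Real.smoothTransition) := hst.continuous_deriv le_rfl
  have hsd : ∀ s, HasDerivAt Real.smoothTransition (deriv Real.smoothTransition s) s := fun s =>
    ((hst.differentiable one_ne_zero) s).hasDerivAt
  have hz : ∀ s ≤ 0, deriv Real.smoothTransition s = 0 := by
    intro s hs
    have : IsLocalMin Real.smoothTransition s := by
      refine Filter.Eventually.of_forall fun y => ?_
      simp only [Real.smoothTransition.zero_of_nonpos hs]; exact Real.smoothTransition.nonneg y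
    exact this.deriv_eq_zero
  have hz1 : ∀ s ≥ 1, deriv Real.smoothTransition s = 0 := by
    intro s hs
    have : IsLocalMax Real.smoothTransition s := by
      refine Filter.Eventually.of_forall fun y => ?_
      simp only [Real.smoothTransition.one_of_one_le hs]; exact Real.smoothTransition.le_one y
    exact this.deriv_eq_zero
  refine ⟨fun x => if x ∈ Ω then Real.smoothTransition (η x / ε - 1) else 0,
    fun x => if x ∈ Ω then deriv Real.smoothTransition (η x / ε - 1) / ε else 0, ?_, ?_, ?_, ?_, ?_,
    K, hKΩ, hKc, ?_, ?_⟩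
  · intro x
    by_cases hx : x ∈ Ω
    · have h1 : HasFDerivAt (fun y => Real.smoothTransition (η y / ε - 1))
          ((deriv Real.smoothTransition (η x / ε - 1) / ε) • fderiv ℝ η x) x := by
        have hd : HasFDerivAt η (fderiv ℝ η x) x := ((G.sm.differentiable two_ne_zero) x).hasFDerivAt
        have h2 : HasFDerivAt (fun y => η y / ε - 1) (ε⁻¹ • fderiv ℝ η x) x := by
          have := (hd.const_smul ε⁻¹).sub_const 1
          refine this.congr_of_eventuallyEq (Filter.Eventually.of_forall fun y => ?_)
          simp [div_eq_inv_mul]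
        have := (hsd (η x / ε - 1)).comp_hasFDerivAt x h2
        rw [smul_smul, ← div_eq_mul_inv] at this
        exact this
      simp only [hx, if_true]
      refine h1.congr_of_eventuallyEq ?_
      filter_upwards [G.op.mem_nhds hx] with y hy
      simp [hy]
    · simp only [hx, if_false, zero_smul]
      have hxK : x ∉ K := fun h => hx (hKΩ h)
      refine (hasFDerivAt_const (0:ℝ) x).congr_of_eventuallyEq ?_
      filter_upwards [hKc.isClosed.isOpen_compl.mem_nhds hxK] with y hy
      by_cases hyΩ : y ∈ Ω
      · simp only [hyΩ, if_true]
        apply Real.smoothTransition.zero_of_nonpos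
        have : η y < ε := by
          by_contra hn
          exact hy ⟨subset_closure hyΩ, not_lt.1 hn⟩
        rw [sub_nonpos, div_le_one hε]; exact this.le
      · simp [hyΩ]
  · intro x
    dsimp only
    split_ifs
    · exact ⟨Real.smoothTransition.nonneg _, Real.smoothTransition.le_one _⟩
    · simp
  · intro x hx h
    simp only [hx, if_true]
    apply Real.smoothTransition.one_of_one_le
    have : 2 ≤ η x / ε := by rwa [le_div_iff₀ hε]
    linarith
  · intro x
    dsimp only
    split_ifs
    · exact div_nonneg (Real.smoothTransition.monotone.deriv_nonneg) hε.le
    · exact le_rfl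
  · intro x h
    dsimp only
    split_ifs
    · rw [hz1, zero_div]
      have : 2 ≤ η x / ε := by rw [le_div_iff₀ hε]; exact h.le
      linarith
    · rfl
  · intro x hx
    dsimp only
    split_ifs with h
    · have : η x / ε - 1 ≤ 0 := by
        rw [sub_nonpos, div_le_one hε]
        by_contra hn
        exact hx ⟨subset_closure h, (not_le.1 hn).le⟩
      exact ⟨Real.smoothTransition.zero_of_nonpos this, by rw [hz _ this, zero_div]⟩
    · simp
  · have : ContinuousOn (fun x => deriv Real.smoothTransition (η x / ε - 1) / ε) K := by
      apply Continuous.continuousOn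
      fun_prop
    refine this.congr fun x hx => ?_
    simp [hKΩ hx]

lemma int_of_cpt {K : Set (EuclideanSpace ℝ (Fin N))} (hK : IsCompact K) {f : EuclideanSpace ℝ (Fin N) → ℝ}
    (hf : ContinuousOn f K) (h0 : ∀ x ∉ K, f x = 0) : Integrable f := by
  rw [← integrableOn_iff_integrable_of_support_subset (s := K)]
  · exact hf.integrableOn_compact hK
  · intro x hx; by_contra hn; exact hx (h0 x hn)

lemma cutoff_ibp (G : Geo Ω η) {ρ k : EuclideanSpace ℝ (Fin N) → ℝ}
    (hρ : ∀ x, HasFDerivAt ρ (k x • fderiv ℝ η x) x)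
    {K : Set (EuclideanSpace ℝ (Fin N))} (hKΩ : K ⊆ Ω) (hK : IsCompact K)
    (h0 : ∀ x ∉ K, ρ x = 0 ∧ k x = 0) (hk : ContinuousOn k K)
    {F : EuclideanSpace ℝ (Fin N) → EuclideanSpace ℝ (Fin N) →L[ℝ] ℝ}
    {F' : EuclideanSpace ℝ (Fin N) → EuclideanSpace ℝ (Fin N) →L[ℝ] EuclideanSpace ℝ (Fin N) →L[ℝ] ℝ}
    (hF : ∀ x ∈ Ω, HasFDerivAt F (F' x) x) (hF' : ContinuousOn F' Ω) :
    ∫ x, ρ x * tr (F' x) = - ∫ x, k x * F x (gradient η x) := by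
  have hFc : ContinuousOn F K := fun x hx => (hF x (hKΩ hx)).continuousAt.continuousWithinAt
  have hFc' : ContinuousOn F' K := hF'.mono hKΩ
  have hρc : ContinuousOn ρ K := fun x hx => (hρ x).continuousAt.continuousWithinAt
  have hηc : Continuous (fderiv ℝ η) := G.sm.continuous_fderiv two_ne_zero
  have hηc' : ContinuousOn (fderiv ℝ η) K := hηc.continuousOn
  have hts : tsupport ρ ⊆ K := by
    apply closure_minimal _ hK.isClosed
    intro x hx; by_contra hn; exact hx (h0 x hn).1
  have I1 : ∀ i : Fin N, Integrable (fun x => ρ x * F' x (EuclideanSpace.single i 1) (EuclideanSpace.single i 1)) := by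
    intro i
    apply int_of_cpt hK
    · fun_prop
    · intro x hx; simp [(h0 x hx).1]
  have I2 : ∀ i : Fin N, Integrable (fun x => (k x • fderiv ℝ η x) (EuclideanSpace.single i 1) * F x (EuclideanSpace.single i 1)) := by
    intro i
    apply int_of_cpt hK
    · fun_prop
    · intro x hx; simp [(h0 x hx).2]
  have key : ∀ i : Fin N, ∫ x, ρ x * F' x (EuclideanSpace.single i 1) (EuclideanSpace.single i 1)
      = - ∫ x, (k x • fderiv ℝ η x) (EuclideanSpace.single i 1) * F x (EuclideanSpace.single i 1) := by
    intro i
    refine integral_bilinear_hasLineDerivAt_right_eq_neg_left_of_integrable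
      (μ := volume) (f := ρ) (f' := fun x => (k x • fderiv ℝ η x) (EuclideanSpace.single i 1))
      (g := fun x => F x (EuclideanSpace.single i 1))
      (g' := fun x => F' x (EuclideanSpace.single i 1) (EuclideanSpace.single i 1))
      (v := EuclideanSpace.single i 1) (B := ContinuousLinearMap.mul ℝ ℝ) (I2 i) (I1 i) ?_ ?_ ?_
    · apply int_of_cpt hK
      · simp only [ContinuousLinearMap.mul_apply']; fun_prop
      · intro x hx; simp [(h0 x hx).1]
    · intro x _; exact (hρ x).hasLineDerivAt _
    · intro x hx
      have := (hF x (hKΩ (hts hx))).clm_apply (hasFDerivAt_const (EuclideanSpace.single i (1:ℝ)) x)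
      have := this.hasLineDerivAt (EuclideanSpace.single i (1:ℝ))
      simpa using this
  have e1 : ∀ x, ρ x * tr (F' x) = ∑ i, ρ x * F' x (EuclideanSpace.single i 1) (EuclideanSpace.single i 1) := by
    intro x; simp [tr, Finset.mul_sum]
  have e2 : ∀ x, k x * F x (gradient η x) = ∑ i, (k x • fderiv ℝ η x) (EuclideanSpace.single i 1) * F x (EuclideanSpace.single i 1) := by
    intro x; rw [← dt_eq]; simp [dt, Finset.mul_sum, mul_assoc]
  simp_rw [e1, e2]
  rw [integral_finsetSum _ (fun i _ => I1 i), integral_finsetSum _ (fun i _ => I2 i), ← Finset.sum_neg_distrib]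
  exact Finset.sum_congr rfl fun i _ => key i

lemma continuousOn_tr {s : Set (EuclideanSpace ℝ (Fin N))} {F' : EuclideanSpace ℝ (Fin N) → EuclideanSpace ℝ (Fin N) →L[ℝ] EuclideanSpace ℝ (Fin N) →L[ℝ] ℝ}
    (hF' : ContinuousOn F' s) : ContinuousOn (fun x => tr (F' x)) s := by
  unfold tr; fun_prop

lemma continuous_gradient (G : Geo Ω η) : Continuous (gradient η) := by
  unfold gradient
  exact (LinearIsometryEquiv.continuous _).comp (G.sm.continuous_fderiv two_ne_zero)

lemma div_strict (G : Geo Ω η)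
    {F : EuclideanSpace ℝ (Fin N) → EuclideanSpace ℝ (Fin N) →L[ℝ] ℝ}
    {F' : EuclideanSpace ℝ (Fin N) → EuclideanSpace ℝ (Fin N) →L[ℝ] EuclideanSpace ℝ (Fin N) →L[ℝ] ℝ}
    (hF : ∀ x ∈ Ω, HasFDerivAt F (F' x) x) (hF' : ContinuousOn F' (closure Ω))
    (hFc : ContinuousOn F (closure Ω))
    (hb : ∀ x ∈ frontier Ω, 0 < F x (gradient η x)) : ∫ x in Ω, tr (F' x) ≤ 0 := by
  have hgc := continuous_gradient G
  have hηc : Continuous η := G.sm.continuous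
  -- lower bound of η on the bad set
  obtain ⟨κ, hκ, hκb⟩ : ∃ κ > 0, ∀ x ∈ closure Ω, η x < κ → 0 < F x (gradient η x) := by
    have hc : ContinuousOn (fun x => F x (gradient η x)) (closure Ω) := hFc.clm_apply hgc.continuousOn
    set B := closure Ω ∩ (fun x => F x (gradient η x)) ⁻¹' Iic 0
    have hB : IsCompact B := by
      apply G.cpt.of_isClosed_subset _ inter_subset_left
      exact hc.preimage_isClosed_of_isClosed isClosed_closure isClosed_Iic
    rcases B.eq_empty_or_nonempty with hE | hE
    · refine ⟨1, one_pos, fun x hx _ => ?_⟩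
      by_contra hn
      have : x ∈ B := ⟨hx, not_lt.1 hn⟩
      rw [hE] at this; exact this
    · obtain ⟨x0, hx0, hmin⟩ := hB.exists_isMinOn hE hηc.continuousOn
      have hx0Ω : x0 ∈ Ω := by
        by_contra hn
        have : x0 ∈ frontier Ω := ⟨hx0.1, by rwa [G.op.interior_eq]⟩
        exact absurd (hb x0 this) (not_lt.2 hx0.2)
      refine ⟨η x0, G.pos _ hx0Ω, fun x hx h => ?_⟩
      by_contra hn
      exact absurd (hmin (a := x) ⟨hx, not_lt.1 hn⟩) (not_le.2 h)
  have hεpos : ∀ n : ℕ, 0 < κ / 4 / ((n:ℝ) + 1) := fun n => by positivity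
  have hεle : ∀ n : ℕ, κ / 4 / ((n:ℝ) + 1) ≤ κ / 4 := fun n =>
    div_le_self (by positivity) (by simp)
  choose ρ k h1 h2 h3 h4 h5 K h6 h7 h8 h9 using fun n => exists_cutoff G (hεpos n)
  have hle : ∀ n, ∫ x in Ω, ρ n x * tr (F' x) ≤ 0 := by
    intro n
    have := cutoff_ibp G (h1 n) (h6 n) (h7 n) (h8 n) (h9 n) hF (hF'.mono subset_closure)
    rw [setIntegral_eq_integral_of_forall_compl_eq_zero, this, neg_nonpos]
    · apply integral_nonneg
      intro x
      by_cases hx : x ∈ K n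
      · rcases lt_or_ge (η x) κ with hlt | hge
        · exact mul_nonneg (h4 n x) (hκb x (subset_closure (h6 n hx)) hlt).le
        · have : k n x = 0 := by
            apply h5
            have := hεle n
            linarith
          simp [this]
      · simp [(h8 n x hx).2]
    · intro x hx
      rw [(h8 n x (fun h => hx (h6 n h))).1, zero_mul]
  have htr := continuousOn_tr hF'
  have hlim : Tendsto (fun n => ∫ x in Ω, ρ n x * tr (F' x)) atTop (𝓝 (∫ x in Ω, tr (F' x))) := by
    apply tendsto_integral_of_dominated_convergence (fun x => |tr (F' x)|)
    · intro n
      apply AEStronglyMeasurable.mul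
      · have : Continuous (ρ n) := continuous_iff_continuousAt.2 fun x => (h1 n x).continuousAt
        exact this.aestronglyMeasurable
      · exact (G.intOn htr).aestronglyMeasurable
    · exact (G.intOn htr).abs
    · intro n
      refine Filter.Eventually.of_forall fun x => ?_
      rw [norm_mul, Real.norm_eq_abs, Real.norm_eq_abs, abs_of_nonneg (h2 n x).1]
      exact mul_le_of_le_one_left (abs_nonneg _) (h2 n x).2
    · filter_upwards [ae_restrict_mem G.op.measurableSet] with x hx
      have hz : Tendsto (fun n : ℕ => 2 * (κ / 4 / ((n:ℝ) + 1))) atTop (𝓝 0) := by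
        have := (tendsto_const_div_atTop_nhds_zero_nat (κ / 4)).comp (tendsto_add_atTop_nat 1)
        have := this.const_mul 2
        simpa [Function.comp_def] using this
      have : ∀ᶠ n : ℕ in atTop, ρ n x * tr (F' x) = tr (F' x) := by
        filter_upwards [hz.eventually (gt_mem_nhds (G.pos x hx))] with n hn
        rw [h3 n x hx hn.le, one_mul]
      exact tendsto_const_nhds.congr' (this.mono fun n hn => hn.symm)
  exact le_of_tendsto' hlim hle

/-- Divergence inequality. -/
lemma div_le (G : Geo Ω η)
    {F : EuclideanSpace ℝ (Fin N) → EuclideanSpace ℝ (Fin N) →L[ℝ] ℝ}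
    {F' : EuclideanSpace ℝ (Fin N) → EuclideanSpace ℝ (Fin N) →L[ℝ] EuclideanSpace ℝ (Fin N) →L[ℝ] ℝ}
    (hF : ∀ x ∈ Ω, HasFDerivAt F (F' x) x) (hF' : ContinuousOn F' (closure Ω))
    (hFc : ContinuousOn F (closure Ω))
    (hb : ∀ x ∈ frontier Ω, 0 ≤ F x (gradient η x)) : ∫ x in Ω, tr (F' x) ≤ 0 := by
  have hd : ContDiff ℝ 1 (fderiv ℝ η) := G.sm.fderiv_right (by norm_num)
  have hdc : Continuous (fderiv ℝ (fderiv ℝ η)) := hd.continuous_fderiv one_ne_zero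
  have hdc' := hdc.continuousOn (s := closure Ω)
  have hdd : ∀ x, HasFDerivAt (fderiv ℝ η) (fderiv ℝ (fderiv ℝ η) x) x := fun x =>
    (hd.differentiable one_ne_zero x).hasFDerivAt
  have key : ∀ δ > 0, (∫ x in Ω, tr (F' x)) + δ * ∫ x in Ω, tr (fderiv ℝ (fderiv ℝ η) x) ≤ 0 := by
    intro δ hδ
    have := div_strict G (F := fun x => F x + δ • fderiv ℝ η x)
      (F' := fun x => F' x + δ • fderiv ℝ (fderiv ℝ η) x) (fun x hx => (hF x hx).add ((hdd x).const_smul δ))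
      (hF'.add (hdc'.const_smul δ)) (hFc.add (hd.continuous.continuousOn.const_smul δ)) ?_
    · have e : ∀ x, tr (F' x + δ • fderiv ℝ (fderiv ℝ η) x) = tr (F' x) + δ * tr (fderiv ℝ (fderiv ℝ η) x) := by
        intro x; simp [tr, Finset.sum_add_distrib, Finset.mul_sum]
      simp_rw [e] at this
      rw [integral_add (G.intOn (continuousOn_tr hF')) ((G.intOn (continuousOn_tr hdc')).const_mul δ), integral_const_mul] at this
      exact this
    · intro x hx
      have h1 := hb x hx
      have h2 : 0 < fderiv ℝ η x (gradient η x) := by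
        rw [← dt_eq, dt_self]
        have := G.gr x hx
        unfold gradient at this
        rw [LinearIsometryEquiv.norm_map] at this
        positivity
      simp only [_root_.add_apply, _root_.smul_apply, smul_eq_mul]
      positivity
  set a := ∫ x in Ω, tr (F' x)
  set b := ∫ x in Ω, tr (fderiv ℝ (fderiv ℝ η) x)
  have hlim : Tendsto (fun δ : ℝ => a + δ * b) (𝓝[>] 0) (𝓝 (a + 0 * b)) := by
    apply tendsto_nhdsWithin_of_tendsto_nhds
    apply Continuous.tendsto
    fun_prop
  have := le_of_tendsto hlim (eventually_nhdsWithin_of_forall fun δ hδ => key δ hδ)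
  simpa using this

end Obs

namespace Obs
open Filter Topology
variable {N : ℕ} {Ω : Set (EuclideanSpace ℝ (Fin N))} {η : EuclideanSpace ℝ (Fin N) → ℝ}

lemma cone (G : Geo Ω η) {x₀ : EuclideanSpace ℝ (Fin N)} (hx₀ : x₀ ∈ closure Ω) :
    ∃ (v : EuclideanSpace ℝ (Fin N)) (c h₀ r : ℝ), 0 < c ∧ 0 < h₀ ∧ 0 < r ∧
      ∀ x ∈ Ω ∩ Metric.ball x₀ r, ∀ w ∈ Metric.ball v c, ∀ t ∈ Icc 0 h₀, x + t • w ∈ Ω := by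
  by_cases hx : x₀ ∈ Ω
  · obtain ⟨ε, hε, hb⟩ := Metric.isOpen_iff.1 G.op x₀ hx
    refine ⟨0, 1, ε / 2, ε / 2, one_pos, by positivity, by positivity, ?_⟩
    intro x hx w hw t ht
    apply hb
    rw [Metric.mem_ball, dist_eq_norm]
    have h1 : ‖x - x₀‖ < ε / 2 := by rw [← dist_eq_norm]; exact hx.2
    have h2 : ‖w‖ < 1 := by simpa using hw
    have h3 : ‖t • w‖ ≤ ε / 2 := by
      rw [norm_smul, Real.norm_eq_abs, abs_of_nonneg ht.1]
      nlinarith [ht.1, ht.2, norm_nonneg w]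
    calc ‖x + t • w - x₀‖ = ‖(x - x₀) + t • w‖ := by congr 1; abel
      _ ≤ _ := norm_add_le _ _
      _ < ε := by linarith
  · have hfr : x₀ ∈ frontier Ω := ⟨hx₀, by rwa [G.op.interior_eq]⟩
    have hg := G.gr x₀ hfr
    set v := gradient η x₀ with hv
    have hdc : Continuous (fderiv ℝ η) := G.sm.continuous_fderiv two_ne_zero
    have hpos : 0 < fderiv ℝ η x₀ v := by
      rw [← dt_eq, dt_self]
      have := hg
      rw [hv] at this
      unfold gradient at this
      rw [LinearIsometryEquiv.norm_map] at this
      positivity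
    have hcont : Continuous (fun p : EuclideanSpace ℝ (Fin N) × EuclideanSpace ℝ (Fin N) => fderiv ℝ η p.1 p.2) := by
      fun_prop
    have hnh := hcont.continuousAt.eventually (lt_mem_nhds (a := (0:ℝ)) (b := fderiv ℝ η ((x₀, v) : EuclideanSpace ℝ (Fin N) × EuclideanSpace ℝ (Fin N)).1 ((x₀, v) : EuclideanSpace ℝ (Fin N) × EuclideanSpace ℝ (Fin N)).2) hpos)
    obtain ⟨ε, hε, hb⟩ := Metric.eventually_nhds_iff_ball.1 hnh
    have hb' : ∀ y ∈ Metric.ball x₀ ε, ∀ w ∈ Metric.ball v ε, 0 < fderiv ℝ η y w := by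
      intro y hy w hw
      exact hb (y, w) (by rw [← ball_prod_same]; exact ⟨hy, hw⟩)
    set R := ‖v‖ + ε
    have hR : 0 < R := by positivity
    refine ⟨v, ε, ε / (2 * R), ε / 2, hε, by positivity, by positivity, ?_⟩
    intro x hx w hw t ht
    have hwR : ‖w‖ ≤ R := by
      have : ‖w - v‖ < ε := by rw [← dist_eq_norm]; exact hw
      have := norm_sub_norm_le w v
      simp only [R]; linarith
    have hin : ∀ s ∈ Icc 0 (ε / (2 * R)), x + s • w ∈ Metric.ball x₀ ε := by
      intro s hs
      rw [Metric.mem_ball, dist_eq_norm]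
      have h1 : ‖x - x₀‖ < ε / 2 := by rw [← dist_eq_norm]; exact hx.2
      have h3 : ‖s • w‖ ≤ ε / 2 := by
        rw [norm_smul, Real.norm_eq_abs, abs_of_nonneg hs.1]
        calc s * ‖w‖ ≤ ε / (2 * R) * R := by gcongr; exact hs.2
          _ = ε / 2 := by field_simp
      calc ‖x + s • w - x₀‖ = ‖(x - x₀) + s • w‖ := by congr 1; abel
        _ ≤ _ := norm_add_le _ _
        _ < ε := by linarith
    -- η monotone along the segment
    have hder : ∀ s, HasDerivAt (fun s : ℝ => η (x + s • w)) (fderiv ℝ η (x + s • w) w) s := by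
      intro s
      have h1 : HasDerivAt (fun s : ℝ => x + s • w) w s := by
        simpa using ((hasDerivAt_id s).smul_const w).const_add x
      exact ((G.sm.differentiable two_ne_zero) _).hasFDerivAt.comp_hasDerivAt s h1
    have hmono : MonotoneOn (fun s : ℝ => η (x + s • w)) (Icc 0 (ε / (2 * R))) := by
      apply monotoneOn_of_deriv_nonneg (convex_Icc _ _)
      · exact fun s _ => (hder s).continuousAt.continuousWithinAt
      · exact fun s _ => (hder s).differentiableAt.differentiableWithinAt
      · intro s hs
        rw [interior_Icc] at hs
        rw [(hder s).deriv]
        exact (hb' _ (hin s (Ioo_subset_Icc_self hs)) w hw).le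
    have hηpos : ∀ s ∈ Icc 0 (ε / (2 * R)), 0 < η (x + s • w) := by
      intro s hs
      have := hmono (left_mem_Icc.2 (by positivity)) hs hs.1
      simp only [zero_smul, add_zero] at this
      exact (G.pos x hx.1).trans_le this
    -- connectedness
    have hpre : IsPreconnected ((fun s : ℝ => x + s • w) '' Icc 0 (ε / (2 * R))) :=
      isPreconnected_Icc.image _ (by fun_prop)
    by_contra hn
    have hx0m : x ∈ (fun s : ℝ => x + s • w) '' Icc 0 (ε / (2 * R)) :=
      ⟨0, left_mem_Icc.2 (by positivity), by simp⟩
    have hnf : ∀ y ∈ (fun s : ℝ => x + s • w) '' Icc 0 (ε / (2 * R)), y ∈ closure Ω → y ∈ Ω := by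
      rintro _ ⟨s, hs, rfl⟩ hy
      exact G.mem_of_pos hy (hηpos s hs)
    obtain ⟨y, _, hy1, hy2⟩ := hpre Ω (closure Ω)ᶜ G.op isClosed_closure.isOpen_compl
      (fun y hy => by
        by_cases h : y ∈ closure Ω
        · exact Or.inl (hnf y hy h)
        · exact Or.inr h)
      ⟨x, hx0m, hx.1⟩ ⟨x + t • w, ⟨t, ht, rfl⟩, fun h => hn (hnf _ ⟨t, ht, rfl⟩ h)⟩
    exact hy2 (subset_closure hy1)

lemma seg_ineq {u : EuclideanSpace ℝ (Fin N) → ℝ} {P : EuclideanSpace ℝ (Fin N) → EuclideanSpace ℝ (Fin N) →L[ℝ] ℝ}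
    (hu : ∀ x ∈ Ω, HasFDerivAt u (P x) x) (hP : ContinuousOn P Ω) {x w : EuclideanSpace ℝ (Fin N)}
    {h R : ℝ} (hh : 0 < h) (hw : ‖w‖ ≤ R) (hseg : ∀ t ∈ Icc 0 h, x + t • w ∈ Ω) :
    u x ^ 2 / 2 ≤ |u x| * |u (x + h • w)| + ∫ t in (0:ℝ)..h, (R ^ 2 * h / 2) * ‖P (x + t • w)‖ ^ 2 := by
  have hseg' : ∀ t ∈ uIcc 0 h, x + t • w ∈ Ω := by rwa [uIcc_of_le hh.le]
  have hder : ∀ s ∈ uIcc 0 h, HasDerivAt (fun s : ℝ => u (x + s • w)) (P (x + s • w) w) s := by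
    intro s hs
    have h1 : HasDerivAt (fun s : ℝ => x + s • w) w s := by
      simpa using ((hasDerivAt_id s).smul_const w).const_add x
    exact (hu _ (hseg' s hs)).comp_hasDerivAt s h1
  have hPc : ContinuousOn (fun s : ℝ => P (x + s • w)) (uIcc 0 h) := by
    apply hP.comp (Continuous.continuousOn (by fun_prop)) hseg'
  have hI1 : IntervalIntegrable (fun s : ℝ => P (x + s • w) w) volume 0 h :=
    (hPc.clm_apply continuousOn_const).intervalIntegrable
  have hI2 : IntervalIntegrable (fun s : ℝ => (R ^ 2 * h / 2) * ‖P (x + s • w)‖ ^ 2) volume 0 h :=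
    (continuousOn_const.mul (hPc.norm.pow 2)).intervalIntegrable
  have ftc := intervalIntegral.integral_eq_sub_of_hasDerivAt hder hI1
  simp only [zero_smul, add_zero] at ftc
  have hle : ∫ s in (0:ℝ)..h, -(u x) * P (x + s • w) w ≤ ∫ s in (0:ℝ)..h, (u x ^ 2 / (2 * h) + (R ^ 2 * h / 2) * ‖P (x + s • w)‖ ^ 2) := by
    apply intervalIntegral.integral_mono_on hh.le (hI1.const_mul _) (intervalIntegrable_const.add hI2)
    intro s _
    have h1 : |P (x + s • w) w| ≤ ‖P (x + s • w)‖ * R :=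
      ((P (x + s • w)).le_opNorm w).trans (by gcongr)
    set p := P (x + s • w) w
    set g := ‖P (x + s • w)‖
    have hg : p ^ 2 ≤ (g * R) ^ 2 := by
      rw [← sq_abs p]; gcongr
    have h2 : 0 ≤ (u x / h + p) ^ 2 * h / 2 := by positivity
    have h3 : (u x / h + p) ^ 2 * h / 2 = u x ^ 2 / (2 * h) + u x * p + p ^ 2 * h / 2 := by
      field_simp
      ring
    have h4 : p ^ 2 * h / 2 ≤ (g * R) ^ 2 * h / 2 := by gcongr
    nlinarith
  rw [intervalIntegral.integral_const_mul, ftc, intervalIntegral.integral_add intervalIntegrable_const hI2,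
    intervalIntegral.integral_const] at hle
  have h5 : (h - 0) • (u x ^ 2 / (2 * h)) = u x ^ 2 / 2 := by
    simp only [smul_eq_mul]; field_simp; ring
  rw [h5] at hle
  have h6 : u x * u (x + h • w) ≤ |u x| * |u (x + h • w)| := by
    rw [← abs_mul]; exact le_abs_self _
  nlinarith

lemma lint_scale {f : EuclideanSpace ℝ (Fin N) → ENNReal} (hf : Measurable f) (x : EuclideanSpace ℝ (Fin N))
    {h : ℝ} (hh : 0 < h) : ∫⁻ w, f (x + h • w) = ENNReal.ofReal ((h ^ N)⁻¹) * ∫⁻ w, f w := by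
  have h1 : ∫⁻ w, f (x + h • w) = ∫⁻ y, f (x + y) ∂(Measure.map (fun w : EuclideanSpace ℝ (Fin N) => h • w) volume) := by
    rw [lintegral_map (by fun_prop) (by fun_prop)]
  rw [h1, Measure.map_addHaar_smul _ hh.ne', lintegral_smul_measure, lintegral_add_left_eq_self]
  rw [finrank_euclideanSpace_fin, abs_of_pos (by positivity)]
  rfl

lemma nash_lint {f g : EuclideanSpace ℝ (Fin N) → ENNReal} (hf : Measurable f) (hg : Measurable g)
    {U B : Set (EuclideanSpace ℝ (Fin N))} {h : ℝ} (hh : 0 < h) {k : ENNReal}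
    (hB : MeasurableSet B) (hU : MeasurableSet U)
    (H : ∀ x ∈ U, ∀ w ∈ B, f x ^ 2 / 2 ≤ f x * f (x + h • w) + k * ∫⁻ t in Icc (0:ℝ) h, g (x + t • w)) :
    volume B * ∫⁻ x in U, f x ^ 2 / 2 ≤
      ENNReal.ofReal ((h ^ N)⁻¹) * (∫⁻ x, f x) ^ 2 + volume B * (k * (ENNReal.ofReal h * ∫⁻ x, g x)) := by
  have h1 : ∀ w ∈ B, ∫⁻ x in U, f x ^ 2 / 2 ≤ (∫⁻ x, f x * f (x + h • w)) + k * (ENNReal.ofReal h * ∫⁻ x, g x) := by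
    intro w hw
    calc ∫⁻ x in U, f x ^ 2 / 2 ≤ ∫⁻ x in U, (f x * f (x + h • w) + k * ∫⁻ t in Icc (0:ℝ) h, g (x + t • w)) :=
          setLIntegral_mono' hU fun x hx => H x hx w hw
      _ ≤ ∫⁻ x, (f x * f (x + h • w) + k * ∫⁻ t in Icc (0:ℝ) h, g (x + t • w)) := setLIntegral_le_lintegral _ _
      _ = (∫⁻ x, f x * f (x + h • w)) + ∫⁻ x, k * ∫⁻ t in Icc (0:ℝ) h, g (x + t • w) := by
          rw [lintegral_add_left (by fun_prop)]
      _ = (∫⁻ x, f x * f (x + h • w)) + k * ∫⁻ x, ∫⁻ t in Icc (0:ℝ) h, g (x + t • w) := by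
          rw [lintegral_const_mul]
          apply Measurable.lintegral_prod_right
          fun_prop
      _ = _ := by
          congr 2
          rw [lintegral_lintegral_swap (by
            apply Measurable.aemeasurable
            simp only [Function.uncurry_def]; fun_prop)]
          simp_rw [lintegral_add_right_eq_self (μ := volume) g]
          rw [setLIntegral_const, Real.volume_Icc, sub_zero, mul_comm]
  calc volume B * ∫⁻ x in U, f x ^ 2 / 2 = ∫⁻ w in B, ∫⁻ x in U, f x ^ 2 / 2 := by
        rw [setLIntegral_const, mul_comm]
    _ ≤ ∫⁻ w in B, ((∫⁻ x, f x * f (x + h • w)) + k * (ENNReal.ofReal h * ∫⁻ x, g x)) :=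
        setLIntegral_mono' hB h1
    _ = (∫⁻ w in B, ∫⁻ x, f x * f (x + h • w)) + volume B * (k * (ENNReal.ofReal h * ∫⁻ x, g x)) := by
        rw [lintegral_add_right _ measurable_const, setLIntegral_const, mul_comm (volume B)]
    _ ≤ _ := by
        gcongr
        calc ∫⁻ w in B, ∫⁻ x, f x * f (x + h • w) ≤ ∫⁻ w, ∫⁻ x, f x * f (x + h • w) := setLIntegral_le_lintegral _ _
          _ = ∫⁻ x, ∫⁻ w, f x * f (x + h • w) := by
              rw [lintegral_lintegral_swap]
              apply Measurable.aemeasurable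
              simp only [Function.uncurry_def]; fun_prop
          _ = ∫⁻ x, f x * (ENNReal.ofReal ((h ^ N)⁻¹) * ∫⁻ w, f w) := by
              congr 1; ext x
              rw [lintegral_const_mul _ (by fun_prop), lint_scale hf x hh]
          _ = _ := by
              rw [lintegral_mul_const _ hf]; ring
          _ ≤ _ := le_rfl

lemma meas_ind (hΩ : MeasurableSet Ω) {f : EuclideanSpace ℝ (Fin N) → ENNReal} (hf : ContinuousOn f Ω) :
    Measurable (Ω.indicator f) := by
  classical
  rw [← piecewise_eq_indicator]
  exact hf.measurable_piecewise continuousOn_const hΩ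

lemma nash_local (G : Geo Ω η) {U : Set (EuclideanSpace ℝ (Fin N))} (hUm : MeasurableSet U) (hUΩ : U ⊆ Ω)
    {v : EuclideanSpace ℝ (Fin N)} {c h₀ : ℝ} (hc : 0 < c)
    (hcone : ∀ x ∈ U, ∀ w ∈ Metric.ball v c, ∀ t ∈ Icc 0 h₀, x + t • w ∈ Ω)
    {h : ℝ} (hh : 0 < h) (hh₀ : h ≤ h₀)
    {u : EuclideanSpace ℝ (Fin N) → ℝ} {P : EuclideanSpace ℝ (Fin N) → EuclideanSpace ℝ (Fin N) →L[ℝ] ℝ}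
    (hu : ∀ x ∈ Ω, HasFDerivAt u (P x) x) (hP : ContinuousOn P Ω) :
    volume (Metric.ball v c) * ∫⁻ x in U, ENNReal.ofReal (|u x|) ^ 2 / 2 ≤
      ENNReal.ofReal ((h ^ N)⁻¹) * (∫⁻ x in Ω, ENNReal.ofReal (|u x|)) ^ 2
      + volume (Metric.ball v c) * (ENNReal.ofReal ((‖v‖ + c) ^ 2 * h / 2) * (ENNReal.ofReal h * ∫⁻ x in Ω, ENNReal.ofReal (‖P x‖ ^ 2))) := by
  have huc : ContinuousOn u Ω := fun x hx => (hu x hx).continuousAt.continuousWithinAt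
  have hfm := meas_ind G.op.measurableSet (f := fun x => ENNReal.ofReal (|u x|))
    (ENNReal.continuous_ofReal.comp_continuousOn huc.abs)
  have hgm := meas_ind G.op.measurableSet (f := fun x => ENNReal.ofReal (‖P x‖ ^ 2))
    (ENNReal.continuous_ofReal.comp_continuousOn (hP.norm.pow 2))
  have key := nash_lint hfm hgm (U := U) (B := Metric.ball v c) hh
    (k := ENNReal.ofReal ((‖v‖ + c) ^ 2 * h / 2)) measurableSet_ball hUm ?_
  · rw [lintegral_indicator G.op.measurableSet, lintegral_indicator G.op.measurableSet] at key
    convert key using 2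
    refine setLIntegral_congr_fun hUm fun x hx => ?_
    simp [hUΩ hx]
  · intro x hx w hw
    have hwR : ‖w‖ ≤ ‖v‖ + c := by
      have : ‖w - v‖ < c := by rw [← dist_eq_norm]; exact hw
      have := norm_sub_norm_le w v
      linarith
    have hseg : ∀ t ∈ Icc 0 h, x + t • w ∈ Ω := fun t ht => hcone x hx w hw t ⟨ht.1, ht.2.trans hh₀⟩
    have h1 := seg_ineq hu hP hh hwR hseg
    have hPc : ContinuousOn (fun s : ℝ => P (x + s • w)) (Icc 0 h) :=
      hP.comp (Continuous.continuousOn (by fun_prop)) hseg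
    rw [intervalIntegral.integral_const_mul, intervalIntegral.integral_of_le hh.le, ← integral_Icc_eq_integral_Ioc] at h1
    have h2 : ∫⁻ t in Icc (0:ℝ) h, Ω.indicator (fun x => ENNReal.ofReal (‖P x‖ ^ 2)) (x + t • w)
        = ENNReal.ofReal (∫ t in Icc (0:ℝ) h, ‖P (x + t • w)‖ ^ 2) := by
      rw [ofReal_integral_eq_lintegral_ofReal]
      · refine setLIntegral_congr_fun measurableSet_Icc fun t ht => ?_
        simp [hseg t ht]
      · exact (hPc.norm.pow 2).integrableOn_compact isCompact_Icc
      · exact Filter.Eventually.of_forall fun t => by positivity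
    have hxh : x + h • w ∈ Ω := hseg h (right_mem_Icc.2 hh.le)
    rw [h2, indicator_of_mem (hUΩ hx), indicator_of_mem hxh, ← ENNReal.ofReal_pow (abs_nonneg _),
      ← ENNReal.ofReal_mul (abs_nonneg _), ← ENNReal.ofReal_mul (by positivity), ← ENNReal.ofReal_add (by positivity)
      (mul_nonneg (by positivity) (integral_nonneg fun t => by positivity))]
    have h3 : ∀ z : ℝ, ENNReal.ofReal z / 2 = ENNReal.ofReal (z / 2) := fun z => by
      rw [ENNReal.ofReal_div_of_pos two_pos, ENNReal.ofReal_ofNat]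
    rw [h3, sq_abs]
    exact ENNReal.ofReal_le_ofReal h1

lemma nash_local' (G : Geo Ω η) {U : Set (EuclideanSpace ℝ (Fin N))} (hUm : MeasurableSet U) (hUΩ : U ⊆ Ω)
    {v : EuclideanSpace ℝ (Fin N)} {c h₀ : ℝ} (hc : 0 < c)
    (hcone : ∀ x ∈ U, ∀ w ∈ Metric.ball v c, ∀ t ∈ Icc 0 h₀, x + t • w ∈ Ω) :
    ∃ C : ENNReal, C ≠ ⊤ ∧ ∀ h : ℝ, 0 < h → h ≤ h₀ →
    ∀ (u : EuclideanSpace ℝ (Fin N) → ℝ) (P : EuclideanSpace ℝ (Fin N) → EuclideanSpace ℝ (Fin N) →L[ℝ] ℝ),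
    (∀ x ∈ Ω, HasFDerivAt u (P x) x) → ContinuousOn P Ω →
    ∫⁻ x in U, ENNReal.ofReal (|u x|) ^ 2 ≤
      C * (ENNReal.ofReal ((h ^ N)⁻¹) * (∫⁻ x in Ω, ENNReal.ofReal (|u x|)) ^ 2
      + ENNReal.ofReal (h ^ 2) * ∫⁻ x in Ω, ENNReal.ofReal (‖P x‖ ^ 2)) := by
  set β := volume (Metric.ball v c) with hβ
  have hβ0 : β ≠ 0 := (Metric.measure_ball_pos volume v hc).ne'
  have hβt : β ≠ ⊤ := measure_ball_lt_top.ne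
  refine ⟨2 / β + ENNReal.ofReal ((‖v‖ + c) ^ 2), ?_, ?_⟩
  · simp [ENNReal.div_eq_top, hβ0]
  intro h hh hh₀ u P hu hP
  have key := nash_local G hUm hUΩ hc hcone hh hh₀ hu hP
  rw [← hβ] at key
  set I := ∫⁻ x in Ω, ENNReal.ofReal (|u x|)
  set D := ∫⁻ x in Ω, ENNReal.ofReal (‖P x‖ ^ 2)
  have e1 : ∫⁻ x in U, ENNReal.ofReal (|u x|) ^ 2 / 2 = (∫⁻ x in U, ENNReal.ofReal (|u x|) ^ 2) * 2⁻¹ := by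
    simp_rw [div_eq_mul_inv]
    rw [lintegral_mul_const' _ _ (by simp)]
  rw [e1] at key
  set L := ∫⁻ x in U, ENNReal.ofReal (|u x|) ^ 2
  have e2 : L = (2 / β) * (β * (L * 2⁻¹)) := by
    rw [div_eq_mul_inv]
    calc L = L * (2 * 2⁻¹) * (β * β⁻¹) := by
          rw [ENNReal.mul_inv_cancel two_ne_zero (by simp), ENNReal.mul_inv_cancel hβ0 hβt]; simp
      _ = _ := by ring
  have e3 : ENNReal.ofReal ((‖v‖ + c) ^ 2 * h / 2) * (ENNReal.ofReal h * D)
      = 2⁻¹ * (ENNReal.ofReal ((‖v‖ + c) ^ 2) * (ENNReal.ofReal (h ^ 2) * D)) := by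
    have : (2:ENNReal)⁻¹ = ENNReal.ofReal (2⁻¹) := by
      rw [ENNReal.ofReal_inv_of_pos two_pos, ENNReal.ofReal_ofNat]
    rw [this, ← mul_assoc, ← mul_assoc, ← mul_assoc, ← ENNReal.ofReal_mul (by positivity), ← ENNReal.ofReal_mul (by positivity),
      ← ENNReal.ofReal_mul (by positivity)]
    congr 2; ring
  rw [e3] at key
  calc L = (2 / β) * (β * (L * 2⁻¹)) := e2
    _ ≤ (2 / β) * (ENNReal.ofReal ((h ^ N)⁻¹) * I ^ 2 + β * (2⁻¹ * (ENNReal.ofReal ((‖v‖ + c) ^ 2) * (ENNReal.ofReal (h ^ 2) * D)))) := by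
        gcongr
    _ = (2 / β) * (ENNReal.ofReal ((h ^ N)⁻¹) * I ^ 2) + (2 * 2⁻¹) * (β * β⁻¹) * (ENNReal.ofReal ((‖v‖ + c) ^ 2) * (ENNReal.ofReal (h ^ 2) * D)) := by
        rw [div_eq_mul_inv]; ring
    _ = (2 / β) * (ENNReal.ofReal ((h ^ N)⁻¹) * I ^ 2) + (ENNReal.ofReal ((‖v‖ + c) ^ 2) * (ENNReal.ofReal (h ^ 2) * D)) := by
        rw [ENNReal.mul_inv_cancel two_ne_zero (by simp), ENNReal.mul_inv_cancel hβ0 hβt]; simp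
    _ ≤ (2 / β) * (ENNReal.ofReal ((h ^ N)⁻¹) * I ^ 2) + (ENNReal.ofReal ((‖v‖ + c) ^ 2) * (ENNReal.ofReal (h ^ 2) * D))
        + ((2 / β) * (ENNReal.ofReal (h ^ 2) * D) + ENNReal.ofReal ((‖v‖ + c) ^ 2) * (ENNReal.ofReal ((h ^ N)⁻¹) * I ^ 2)) :=
        le_self_add
    _ = _ := by ring

lemma nash_global (G : Geo Ω η) :
    ∃ C : ENNReal, C ≠ ⊤ ∧ ∃ h₀ : ℝ, 0 < h₀ ∧ ∀ h : ℝ, 0 < h → h ≤ h₀ →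
    ∀ (u : EuclideanSpace ℝ (Fin N) → ℝ) (P : EuclideanSpace ℝ (Fin N) → EuclideanSpace ℝ (Fin N) →L[ℝ] ℝ),
    (∀ x ∈ Ω, HasFDerivAt u (P x) x) → ContinuousOn P Ω →
    ∫⁻ x in Ω, ENNReal.ofReal (|u x|) ^ 2 ≤
      C * (ENNReal.ofReal ((h ^ N)⁻¹) * (∫⁻ x in Ω, ENNReal.ofReal (|u x|)) ^ 2
      + ENNReal.ofReal (h ^ 2) * ∫⁻ x in Ω, ENNReal.ofReal (‖P x‖ ^ 2)) := by
  have := G.cpt.induction_on (p := fun S => ∃ C : ENNReal, C ≠ ⊤ ∧ ∃ h₀ : ℝ, 0 < h₀ ∧ ∀ h : ℝ, 0 < h → h ≤ h₀ →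
    ∀ (u : EuclideanSpace ℝ (Fin N) → ℝ) (P : EuclideanSpace ℝ (Fin N) → EuclideanSpace ℝ (Fin N) →L[ℝ] ℝ),
    (∀ x ∈ Ω, HasFDerivAt u (P x) x) → ContinuousOn P Ω →
    ∫⁻ x in Ω ∩ S, ENNReal.ofReal (|u x|) ^ 2 ≤
      C * (ENNReal.ofReal ((h ^ N)⁻¹) * (∫⁻ x in Ω, ENNReal.ofReal (|u x|)) ^ 2
      + ENNReal.ofReal (h ^ 2) * ∫⁻ x in Ω, ENNReal.ofReal (‖P x‖ ^ 2))) ?_ ?_ ?_ ?_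
  · obtain ⟨C, hC, h₀, hh₀, H⟩ := this
    refine ⟨C, hC, h₀, hh₀, ?_⟩
    rwa [inter_eq_left.2 subset_closure] at H
  · exact ⟨0, by simp, 1, one_pos, by simp⟩
  · rintro S T hST ⟨C, hC, h₀, hh₀, H⟩
    refine ⟨C, hC, h₀, hh₀, fun h h1 h2 u P hu hP => le_trans ?_ (H h h1 h2 u P hu hP)⟩
    exact lintegral_mono_set (inter_subset_inter_right _ hST)
  · rintro S T ⟨C, hC, h₀, hh₀, H⟩ ⟨C', hC', h₀', hh₀', H'⟩
    refine ⟨C + C', by simp [hC, hC'], min h₀ h₀', by positivity, fun h h1 h2 u P hu hP => ?_⟩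
    rw [inter_union_distrib_left, add_mul]
    refine (lintegral_union_le _ _ _).trans ?_
    gcongr
    · exact H h h1 (h2.trans (min_le_left _ _)) u P hu hP
    · exact H' h h1 (h2.trans (min_le_right _ _)) u P hu hP
  · intro x₀ hx₀
    obtain ⟨v, c, h₀, r, hc, hh₀, hr, hcone⟩ := cone G hx₀
    obtain ⟨C, hC, H⟩ := nash_local' G (G.op.measurableSet.inter measurableSet_ball) inter_subset_left hc hcone
    exact ⟨Metric.ball x₀ r, mem_nhdsWithin_of_mem_nhds (Metric.ball_mem_nhds _ hr), C, hC, h₀, hh₀, H⟩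

/-- Nash type inequality. -/
lemma nash (G : Geo Ω η) :
    ∃ C > (0:ℝ), ∃ δ₀ > (0:ℝ), ∀ δ : ℝ, 0 < δ → δ ≤ δ₀ →
    ∀ (u : EuclideanSpace ℝ (Fin N) → ℝ) (P : EuclideanSpace ℝ (Fin N) → EuclideanSpace ℝ (Fin N) →L[ℝ] ℝ),
    (∀ x ∈ Ω, HasFDerivAt u (P x) x) → ContinuousOn P (closure Ω) → ContinuousOn u (closure Ω) →
    (∀ x ∈ Ω, 0 ≤ u x) →
    ∫ x in Ω, u x ^ 2 ≤ C * ((δ ^ N)⁻¹ * (∫ x in Ω, u x) ^ 2 + δ * ∫ x in Ω, ‖P x‖ ^ 2) := by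
  obtain ⟨C, hC, h₀, hh₀, H⟩ := nash_global G
  refine ⟨C.toReal + 1, by positivity, min 1 (h₀ ^ 2), by positivity, fun δ hδ hδ₀ u P hu hP huc hpos => ?_⟩
  have hP' := hP.mono subset_closure
  have hs : 0 < √δ := Real.sqrt_pos.2 hδ
  have h1 := H (√δ) hs (by
    rw [Real.sqrt_le_left hh₀.le]; exact hδ₀.trans (min_le_right _ _)) u P hu hP'
  have i1 : ∫⁻ x in Ω, ENNReal.ofReal (|u x|) ^ 2 = ENNReal.ofReal (∫ x in Ω, u x ^ 2) := by
    rw [ofReal_integral_eq_lintegral_ofReal (f := fun x => u x ^ 2) (G.intOn (huc.pow 2)) (Filter.Eventually.of_forall fun t => by positivity)]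
    congr 1; ext x
    rw [← ENNReal.ofReal_pow (abs_nonneg _), sq_abs]
  have i2 : ∫⁻ x in Ω, ENNReal.ofReal (|u x|) = ENNReal.ofReal (∫ x in Ω, u x) := by
    rw [ofReal_integral_eq_lintegral_ofReal (G.intOn huc)
      ((ae_restrict_mem G.op.measurableSet).mono hpos)]
    exact setLIntegral_congr_fun G.op.measurableSet fun x hx => by simp only [abs_of_nonneg (hpos x hx)]
  have i3 : ∫⁻ x in Ω, ENNReal.ofReal (‖P x‖ ^ 2) = ENNReal.ofReal (∫ x in Ω, ‖P x‖ ^ 2) := by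
    rw [ofReal_integral_eq_lintegral_ofReal (f := fun x => ‖P x‖ ^ 2) (G.intOn (hP.norm.pow 2)) (Filter.Eventually.of_forall fun t => by positivity)]
  have n1 : 0 ≤ ∫ x in Ω, u x := setIntegral_nonneg G.op.measurableSet hpos
  have n3 : 0 ≤ ∫ x in Ω, ‖P x‖ ^ 2 := integral_nonneg fun x => by positivity
  rw [i1, i2, i3, ← ENNReal.ofReal_toReal hC, ← ENNReal.ofReal_pow n1, ← ENNReal.ofReal_mul (by positivity),
    ← ENNReal.ofReal_mul (by positivity), ← ENNReal.ofReal_add (by positivity) (by positivity),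
    ← ENNReal.ofReal_mul (by positivity), ENNReal.ofReal_le_ofReal_iff (by positivity), Real.sq_sqrt hδ.le] at h1
  have h2 : ((√δ) ^ N)⁻¹ ≤ (δ ^ N)⁻¹ := by
    have : δ ≤ √δ := by
      have hle : √δ ≤ 1 := by rw [Real.sqrt_le_one]; exact hδ₀.trans (min_le_left _ _)
      nlinarith [Real.sq_sqrt hδ.le]
    gcongr
  refine h1.trans ?_
  gcongr
  linarith

end Obs

namespace Obs
open Filter Topology
variable {N : ℕ} {Ω : Set (EuclideanSpace ℝ (Fin N))} {η : EuclideanSpace ℝ (Fin N) → ℝ}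

structure Sol (Ω : Set (EuclideanSpace ℝ (Fin N))) (η : EuclideanSpace ℝ (Fin N) → ℝ) (T A : ℝ)
    (q qt : ℝ × EuclideanSpace ℝ (Fin N) → ℝ)
    (P : ℝ × EuclideanSpace ℝ (Fin N) → EuclideanSpace ℝ (Fin N) →L[ℝ] ℝ)
    (H : ℝ × EuclideanSpace ℝ (Fin N) → EuclideanSpace ℝ (Fin N) →L[ℝ] EuclideanSpace ℝ (Fin N) →L[ℝ] ℝ) : Prop where
  hA : 0 ≤ A
  qc : ContinuousOn q (Icc 0 T ×ˢ closure Ω)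
  q0 : ∀ p ∈ Icc 0 T ×ˢ closure Ω, 0 ≤ q p
  qd : ∀ p ∈ Ioo 0 T ×ˢ closure Ω, HasDerivAt (fun τ => q (τ, p.2)) (qt p) p.1
  qtc : ContinuousOn qt (Ioo 0 T ×ˢ closure Ω)
  Pd : ∀ p ∈ Ioo 0 T ×ˢ closure Ω, HasFDerivAt (fun z => q (p.1, z)) (P p) p.2
  Hd : ∀ p ∈ Ioo 0 T ×ˢ closure Ω, HasFDerivAt (fun z => P (p.1, z)) (H p) p.2
  Pc : ContinuousOn P (Ioo 0 T ×ˢ closure Ω)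
  Hc : ContinuousOn H (Ioo 0 T ×ˢ closure Ω)
  eq : ∀ p ∈ Ioo 0 T ×ˢ Ω, |qt p + tr (H p)| ≤ A * q p
  nm : ∀ t ∈ Ioo 0 T, ∀ x ∈ frontier Ω, P (t, x) (gradient η x) = 0

lemma param_cont (G : Geo Ω η) {a b : ℝ} {w : ℝ × EuclideanSpace ℝ (Fin N) → ℝ}
    (hw : ContinuousOn w (Icc a b ×ˢ closure Ω)) {S : Set (EuclideanSpace ℝ (Fin N))}
    (hS : MeasurableSet S) (hSΩ : S ⊆ Ω) :
    ContinuousOn (fun t => ∫ x in S, w (t, x)) (Icc a b) := by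
  obtain ⟨C, hC⟩ := (isCompact_Icc.prod G.cpt).exists_bound_of_continuousOn hw
  have hvol : volume S < ⊤ := (measure_mono hSΩ).trans_lt G.vol
  apply continuousOn_of_dominated (bound := fun _ => C)
  · intro t ht
    have : ContinuousOn (fun x => w (t, x)) (closure Ω) :=
      hw.comp (by fun_prop) (fun x hx => ⟨ht, hx⟩)
    exact ((G.intOn this).mono_set hSΩ).aestronglyMeasurable
  · intro t ht
    filter_upwards [ae_restrict_mem hS] with x hx
    exact hC (t, x) ⟨ht, subset_closure (hSΩ hx)⟩
  · exact integrableOn_const hvol.ne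
  · filter_upwards [ae_restrict_mem hS] with x hx
    exact hw.comp (by fun_prop) (fun t ht => ⟨ht, subset_closure (hSΩ hx)⟩)

lemma slice {X : Type*} [TopologicalSpace X] {T t : ℝ} (ht : t ∈ Ioo 0 T) {w : ℝ × EuclideanSpace ℝ (Fin N) → X}
    (hw : ContinuousOn w (Ioo 0 T ×ˢ closure Ω)) : ContinuousOn (fun x => w (t, x)) (closure Ω) :=
  hw.comp (by fun_prop) (fun x hx => ⟨ht, hx⟩)

lemma slice' {T t : ℝ} (ht : t ∈ Icc 0 T) {w : ℝ × EuclideanSpace ℝ (Fin N) → ℝ}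
    (hw : ContinuousOn w (Icc 0 T ×ˢ closure Ω)) : ContinuousOn (fun x => w (t, x)) (closure Ω) :=
  hw.comp (by fun_prop) (fun x hx => ⟨ht, hx⟩)

lemma param_deriv (G : Geo Ω η) {T : ℝ} {w w' : ℝ × EuclideanSpace ℝ (Fin N) → ℝ}
    (hw : ContinuousOn w (Icc 0 T ×ˢ closure Ω))
    (hd : ∀ p ∈ Ioo 0 T ×ˢ closure Ω, HasDerivAt (fun τ => w (τ, p.2)) (w' p) p.1)
    (hw' : ContinuousOn w' (Ioo 0 T ×ˢ closure Ω)) {t : ℝ} (ht : t ∈ Ioo 0 T) :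
    HasDerivAt (fun t => ∫ x in Ω, w (t, x)) (∫ x in Ω, w' (t, x)) t := by
  obtain ⟨a, ha1, ha2⟩ := exists_between ht.1
  obtain ⟨b, hb1, hb2⟩ := exists_between ht.2
  have hsub : Icc a b ⊆ Ioo 0 T := fun s hs => ⟨ha1.trans_le hs.1, hs.2.trans_lt hb2⟩
  obtain ⟨C, hC⟩ := (isCompact_Icc.prod G.cpt).exists_bound_of_continuousOn
    (hw'.mono (prod_mono hsub (subset_refl (closure Ω))))
  refine (hasDerivAt_integral_of_dominated_loc_of_deriv_le (F := fun t x => w (t, x)) (F' := fun t x => w' (t, x))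
    (s := Ioo a b) (bound := fun _ => C) (Ioo_mem_nhds ha2 hb1) ?_ ?_ ?_ ?_ ?_ ?_).2
  · filter_upwards [Ioo_mem_nhds ht.1 ht.2] with s hs
    exact (G.intOn (slice' (Ioo_subset_Icc_self hs) hw)).aestronglyMeasurable
  · exact G.intOn (slice' (Ioo_subset_Icc_self ht) hw)
  · exact (G.intOn (slice ht hw')).aestronglyMeasurable
  · filter_upwards [ae_restrict_mem G.op.measurableSet] with x hx s hs
    exact hC (s, x) ⟨Ioo_subset_Icc_self hs, subset_closure hx⟩
  · exact integrableOn_const G.vol.ne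
  · filter_upwards [ae_restrict_mem G.op.measurableSet] with x hx s hs
    exact hd (s, x) ⟨hsub (Ioo_subset_Icc_self hs), subset_closure hx⟩

lemma tr_add (F F' : EuclideanSpace ℝ (Fin N) →L[ℝ] EuclideanSpace ℝ (Fin N) →L[ℝ] ℝ) :
    tr (F + F') = tr F + tr F' := by simp [tr, Finset.sum_add_distrib]
lemma tr_sub (F F' : EuclideanSpace ℝ (Fin N) →L[ℝ] EuclideanSpace ℝ (Fin N) →L[ℝ] ℝ) :
    tr (F - F') = tr F - tr F' := by simp [tr, Finset.sum_sub_distrib]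
lemma tr_smul (c : ℝ) (F : EuclideanSpace ℝ (Fin N) →L[ℝ] EuclideanSpace ℝ (Fin N) →L[ℝ] ℝ) :
    tr (c • F) = c * tr F := by simp [tr, Finset.mul_sum]
lemma tr_smulRight (f g : EuclideanSpace ℝ (Fin N) →L[ℝ] ℝ) : tr (f.smulRight g) = dt f g := by
  simp [tr, dt]
lemma dt_comm (f g : EuclideanSpace ℝ (Fin N) →L[ℝ] ℝ) : dt f g = dt g f := by
  simp [dt, mul_comm]

variable {T A : ℝ} {q qt : ℝ × EuclideanSpace ℝ (Fin N) → ℝ}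
    {P : ℝ × EuclideanSpace ℝ (Fin N) → EuclideanSpace ℝ (Fin N) →L[ℝ] ℝ}
    {H : ℝ × EuclideanSpace ℝ (Fin N) → EuclideanSpace ℝ (Fin N) →L[ℝ] EuclideanSpace ℝ (Fin N) →L[ℝ] ℝ}

lemma lap_le (G : Geo Ω η) (S : Sol Ω η T A q qt P H) {t : ℝ} (ht : t ∈ Ioo 0 T) :
    ∫ x in Ω, tr (H (t, x)) ≤ 0 :=
  div_le G (F := fun x => P (t, x)) (fun x hx => S.Hd (t, x) ⟨ht, subset_closure hx⟩) (slice ht S.Hc)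
    (slice ht S.Pc) (fun x hx => (S.nm t ht x hx).ge)

lemma cont_smulRight {s : Set (EuclideanSpace ℝ (Fin N))} {f g : EuclideanSpace ℝ (Fin N) → EuclideanSpace ℝ (Fin N) →L[ℝ] ℝ}
    (hf : ContinuousOn f s) (hg : ContinuousOn g s) : ContinuousOn (fun x => (f x).smulRight (g x)) s := by
  have h : Continuous (fun p : (EuclideanSpace ℝ (Fin N) →L[ℝ] ℝ) × (EuclideanSpace ℝ (Fin N) →L[ℝ] ℝ) => p.1.smulRight p.2) :=
    (ContinuousLinearMap.smulRightL ℝ (EuclideanSpace ℝ (Fin N)) (EuclideanSpace ℝ (Fin N) →L[ℝ] ℝ)).isBoundedBilinearMap.continuous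
  exact h.comp_continuousOn (hf.prodMk hg)

lemma energy_le (G : Geo Ω η) (S : Sol Ω η T A q qt P H) {t : ℝ} (ht : t ∈ Ioo 0 T) :
    ∫ x in Ω, (q (t, x) * tr (H (t, x)) + ‖P (t, x)‖ ^ 2) ≤ 0 := by
  have hq := slice' (Ioo_subset_Icc_self ht) S.qc
  have hP := slice ht S.Pc
  have hH := slice ht S.Hc
  have := div_le G (F := fun x => q (t, x) • P (t, x))
    (F' := fun x => q (t, x) • H (t, x) + (P (t, x)).smulRight (P (t, x)))
    (fun x hx => (S.Pd (t, x) ⟨ht, subset_closure hx⟩).smul (S.Hd (t, x) ⟨ht, subset_closure hx⟩))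
    ((hq.smul hH).add (cont_smulRight hP hP)) (hq.smul hP)
    (fun x hx => by simp [S.nm t ht x hx])
  simpa only [tr_add, tr_smul, tr_smulRight, dt_self] using this

lemma weight_le (G : Geo Ω η) (S : Sol Ω η T A q qt P H) {t : ℝ} (ht : t ∈ Ioo 0 T)
    {ψ : EuclideanSpace ℝ (Fin N) → ℝ} {dψ : EuclideanSpace ℝ (Fin N) → EuclideanSpace ℝ (Fin N) →L[ℝ] ℝ}
    {ddψ : EuclideanSpace ℝ (Fin N) → EuclideanSpace ℝ (Fin N) →L[ℝ] EuclideanSpace ℝ (Fin N) →L[ℝ] ℝ}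
    (h1 : ∀ x, HasFDerivAt ψ (dψ x) x) (h2 : ∀ x, HasFDerivAt dψ (ddψ x) x) (h3 : Continuous ddψ)
    (hb : ∀ x ∈ frontier Ω, 0 ≤ dψ x (gradient η x)) :
    ∫ x in Ω, (q (t, x) * tr (ddψ x) - ψ x * tr (H (t, x))) ≤ 0 := by
  have hq := slice' (Ioo_subset_Icc_self ht) S.qc
  have hP := slice ht S.Pc
  have hH := slice ht S.Hc
  have hψ : ContinuousOn ψ (closure Ω) := fun x _ => (h1 x).continuousAt.continuousWithinAt
  have hdψ : ContinuousOn dψ (closure Ω) := fun x _ => (h2 x).continuousAt.continuousWithinAt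
  have hψH : ContinuousOn (fun x => ψ x • H (t, x)) (closure Ω) := hψ.smul hH
  have := div_le G (F := fun x => q (t, x) • dψ x + (-ψ x) • P (t, x))
    (F' := fun x => (q (t, x) • ddψ x + (P (t, x)).smulRight (dψ x)) + ((-ψ x) • H (t, x) + (-dψ x).smulRight (P (t, x))))
    (fun x hx => ((S.Pd (t, x) ⟨ht, subset_closure hx⟩).smul (h2 x)).add
      ((h1 x).neg.smul (S.Hd (t, x) ⟨ht, subset_closure hx⟩)))
    (((hq.smul h3.continuousOn).add (cont_smulRight hP hdψ)).add
      ((hψ.neg.smul hH).add (cont_smulRight hdψ.neg hP))) ((hq.smul hdψ).add (hψ.neg.smul hP))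
    (fun x hx => by
      have := hb x hx
      have h0 := S.q0 (t, x) ⟨Ioo_subset_Icc_self ht, frontier_subset_closure hx⟩
      simp only [_root_.add_apply, _root_.smul_apply, smul_eq_mul, S.nm t ht x hx]
      simp only [mul_zero, add_zero]
      positivity)
  simp only [tr_add, tr_smul, tr_smulRight] at this
  convert this using 2
  ext x
  rw [dt_comm (-dψ x)]
  have : dt (P (t, x)) (-dψ x) = - dt (P (t, x)) (dψ x) := by simp [dt]
  rw [this]; ring

end Obs

namespace Obs
open Filter Topology

variable {N : ℕ} {Ω : Set (EuclideanSpace ℝ (Fin N))} {η : EuclideanSpace ℝ (Fin N) → ℝ}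
  {T A : ℝ} {q qt : ℝ × EuclideanSpace ℝ (Fin N) → ℝ}
  {P : ℝ × EuclideanSpace ℝ (Fin N) → EuclideanSpace ℝ (Fin N) →L[ℝ] ℝ}
  {H : ℝ × EuclideanSpace ℝ (Fin N) → EuclideanSpace ℝ (Fin N) →L[ℝ] EuclideanSpace ℝ (Fin N) →L[ℝ] ℝ}

lemma mono_of {f f' : ℝ → ℝ} {a b : ℝ} (hc : ContinuousOn f (Icc a b))
    (hd : ∀ t ∈ Ioo a b, HasDerivAt f (f' t) t) (h0 : ∀ t ∈ Ioo a b, 0 ≤ f' t) : MonotoneOn f (Icc a b) := by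
  apply monotoneOn_of_deriv_nonneg (convex_Icc a b) hc
  · rw [interior_Icc]; exact fun t ht => (hd t ht).differentiableAt.differentiableWithinAt
  · rw [interior_Icc]; exact fun t ht => by rw [(hd t ht).deriv]; exact h0 t ht

lemma mass_nonneg (S : Sol Ω η T A q qt P H) (G : Geo Ω η) {t : ℝ} (ht : t ∈ Icc 0 T) : 0 ≤ ∫ x in Ω, q (t, x) :=
  setIntegral_nonneg G.op.measurableSet (fun x hx => S.q0 (t, x) ⟨ht, subset_closure hx⟩)

lemma mass_mono (G : Geo Ω η) (S : Sol Ω η T A q qt P H) :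
    MonotoneOn (fun t => exp (A * t) * ∫ x in Ω, q (t, x)) (Icc 0 T) := by
  refine mono_of (f' := fun t => exp (A * t) * (A * 1) * (∫ x in Ω, q (t, x)) + exp (A * t) * ∫ x in Ω, qt (t, x)) ?_ ?_ ?_
  · exact (by fun_prop : Continuous fun t => exp (A * t)).continuousOn.mul
      (param_cont G S.qc G.op.measurableSet subset_rfl)
  · intro t ht
    exact (((hasDerivAt_id t).const_mul A).exp).mul (param_deriv G S.qc S.qd S.qtc ht)
  · intro t ht
    have hq := slice' (Ioo_subset_Icc_self ht) S.qc
    have i1 := G.intOn hq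
    have i2 := G.intOn (slice ht S.qtc)
    have i3 := G.intOn (continuousOn_tr (slice ht S.Hc))
    have h1 := lap_le G S ht
    have h2 : 0 ≤ ∫ x in Ω, (A * q (t, x) + (qt (t, x) + tr (H (t, x)))) :=
      setIntegral_nonneg G.op.measurableSet (fun x hx => by
        have := neg_le_of_abs_le (S.eq (t, x) ⟨ht, hx⟩)
        linarith)
    have i4 : IntegrableOn (fun x => qt (t, x) + tr (H (t, x))) Ω := i2.add i3
    rw [integral_add (i1.const_mul A) i4, integral_add i2 i3, integral_const_mul] at h2
    have := exp_pos (A * t)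
    have : 0 ≤ exp (A * t) * (A * (∫ x in Ω, q (t, x)) + ∫ x in Ω, qt (t, x)) :=
      mul_nonneg this.le (by linarith)
    linarith

lemma energy_deriv (G : Geo Ω η) (S : Sol Ω η T A q qt P H) {t : ℝ} (ht : t ∈ Ioo 0 T) :
    HasDerivAt (fun t => ∫ x in Ω, q (t, x) ^ 2) (∫ x in Ω, 2 * q (t, x) * qt (t, x)) t := by
  refine param_deriv G (w := fun p => q p ^ 2) (w' := fun p => 2 * q p * qt p) (S.qc.pow 2) ?_ ?_ ht
  · intro p hp
    have := (S.qd p hp).pow 2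
    refine HasDerivAt.congr_deriv (f := fun τ => q (τ, p.2) ^ 2) this ?_
    norm_num
  · exact ((S.qc.mono (prod_mono Ioo_subset_Icc_self subset_rfl)).const_mul 2 ).mul S.qtc

lemma energy_lower (G : Geo Ω η) (S : Sol Ω η T A q qt P H) {t : ℝ} (ht : t ∈ Ioo 0 T) :
    2 * (∫ x in Ω, ‖P (t, x)‖ ^ 2) - 2 * A * (∫ x in Ω, q (t, x) ^ 2) ≤ ∫ x in Ω, 2 * q (t, x) * qt (t, x) := by
  have hq := slice' (Ioo_subset_Icc_self ht) S.qc
  have hP := slice ht S.Pc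
  have hH := continuousOn_tr (slice ht S.Hc)
  have hqt := slice ht S.qtc
  have h1 := energy_le G S ht
  have iP := G.intOn (f := fun x => ‖P (t, x)‖ ^ 2) (hP.norm.pow 2)
  have iq := G.intOn (f := fun x => q (t, x) ^ 2) (hq.pow 2)
  have iqH := G.intOn (f := fun x => q (t, x) * tr (H (t, x))) (hq.mul hH)
  have iqt := G.intOn (f := fun x => 2 * q (t, x) * qt (t, x)) ((hq.const_mul 2).mul hqt)
  have h2 : 0 ≤ ∫ x in Ω, ((2 * A * q (t, x) ^ 2 + 2 * q (t, x) * qt (t, x)) + 2 * (q (t, x) * tr (H (t, x)))) :=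
    setIntegral_nonneg G.op.measurableSet (fun x hx => by
      have h := neg_le_of_abs_le (S.eq (t, x) ⟨ht, hx⟩)
      have h0 := S.q0 (t, x) ⟨Ioo_subset_Icc_self ht, subset_closure hx⟩
      nlinarith [mul_nonneg h0 (by linarith : 0 ≤ A * q (t, x) + (qt (t, x) + tr (H (t, x))))])
  have i4 : IntegrableOn (fun x => 2 * A * q (t, x) ^ 2 + 2 * q (t, x) * qt (t, x)) Ω := (iq.const_mul (2 * A)).add iqt
  rw [integral_add i4 (iqH.const_mul 2), integral_add (iq.const_mul (2 * A)) iqt,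
    integral_const_mul, integral_const_mul] at h2
  rw [integral_add iqH iP] at h1
  linarith

lemma smoothing (G : Geo Ω η) : ∃ C > (0:ℝ), ∃ k : ℕ, ∀ (T A : ℝ) (q qt : ℝ × EuclideanSpace ℝ (Fin N) → ℝ)
    (P : ℝ × EuclideanSpace ℝ (Fin N) → EuclideanSpace ℝ (Fin N) →L[ℝ] ℝ)
    (H : ℝ × EuclideanSpace ℝ (Fin N) → EuclideanSpace ℝ (Fin N) →L[ℝ] EuclideanSpace ℝ (Fin N) →L[ℝ] ℝ),
    Sol Ω η T A q qt P H → ∀ τ, 0 < τ → τ ≤ 1 → τ ≤ T →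
    τ ^ k * ∫ x in Ω, q (0, x) ^ 2 ≤ C * (exp (A * τ) * ∫ x in Ω, q (τ, x)) ^ 2 := by
  obtain ⟨C, hC, δ₀, hδ₀, hn⟩ := nash G
  obtain ⟨j, hj⟩ := exists_nat_ge (2 / (C * δ₀))
  set k : ℕ := j + N with hk
  set κ : ℝ := C * (k + 1) / 2 with hκ
  have hκ0 : 0 < κ := by positivity
  have hκδ : 1 ≤ κ * δ₀ := by
    have : (j:ℝ) ≤ k + 1 := by rw [hk]; push_cast; linarith [(Nat.cast_nonneg N : (0:ℝ) ≤ N)]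
    rw [div_le_iff₀ (by positivity)] at hj
    rw [hκ]; nlinarith [mul_le_mul_of_nonneg_right this (by positivity : 0 ≤ C * δ₀)]
  refine ⟨2 * κ ^ (N + 1), by positivity, k + 1, ?_⟩
  intro T A q qt P H S τ hτ hτ1 hτT
  set m : ℝ → ℝ := fun t => ∫ x in Ω, q (t, x) with hm
  set y : ℝ → ℝ := fun t => ∫ x in Ω, q (t, x) ^ 2 with hy
  set B : ℝ := 2 * κ ^ (N + 1) * (exp (A * τ) * m τ) ^ 2 with hB
  have hB0 : 0 ≤ B := by positivity
  have hsub : Icc 0 τ ⊆ Icc 0 T := Icc_subset_Icc_right hτT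
  have key : MonotoneOn (fun t => ((τ - t) ^ (k + 1) * exp (2 * A * t)) * y t + B * t) (Icc 0 τ) := by
    refine mono_of (f' := fun t => ((((k + 1 : ℕ):ℝ) * (τ - t) ^ k * (-1)) * exp (2 * A * t) + (τ - t) ^ (k + 1) * (exp (2 * A * t) * (2 * A * 1))) * y t
      + ((τ - t) ^ (k + 1) * exp (2 * A * t)) * (∫ x in Ω, 2 * q (t, x) * qt (t, x)) + B * 1) ?_ ?_ ?_
    · refine ContinuousOn.add (ContinuousOn.mul (by fun_prop) ?_) (by fun_prop)
      exact (param_cont G (w := fun p => q p ^ 2) (S.qc.pow 2) G.op.measurableSet subset_rfl).mono hsub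
    · intro t ht
      have ht' : t ∈ Ioo 0 T := ⟨ht.1, ht.2.trans_le hτT⟩
      have h1 := (((hasDerivAt_id t).const_sub τ).pow (k + 1)).mul (((hasDerivAt_id t).const_mul (2 * A)).exp)
      have h2 := (h1.mul (energy_deriv G S ht')).add ((hasDerivAt_id t).const_mul B)
      exact h2
    · intro t ht
      have ht' : t ∈ Ioo 0 T := ⟨ht.1, ht.2.trans_le hτT⟩
      set s := τ - t with hs
      have hs0 : 0 < s := by rw [hs]; linarith [ht.2]
      have hs1 : s ≤ 1 := by rw [hs]; linarith [ht.1]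
      have hδ : s / κ ≤ δ₀ := by rw [div_le_iff₀ hκ0]; linarith
      have hN := hn (s / κ) (by positivity) hδ (fun x => q (t, x)) (fun x => P (t, x))
        (fun x hx => S.Pd (t, x) ⟨ht', subset_closure hx⟩) (slice ht' S.Pc)
        (slice' (Ioo_subset_Icc_self ht') S.qc)
        (fun x hx => S.q0 (t, x) ⟨Ioo_subset_Icc_self ht', subset_closure hx⟩)
      have hE := energy_lower G S ht'
      have hM := mass_mono G S (Ioo_subset_Icc_self ht') ⟨hτ.le, hτT⟩ ht.2.le
      have hm0 := mass_nonneg S G (Ioo_subset_Icc_self ht')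
      change y t ≤ C * (((s / κ) ^ N)⁻¹ * m t ^ 2 + s / κ * _) at hN
      change exp (A * t) * m t ≤ exp (A * τ) * m τ at hM
      change 0 ≤ m t at hm0
      change _ - 2 * A * y t ≤ _ at hE
      generalize (∫ x in Ω, ‖P (t, x)‖ ^ 2) = D at hN hE
      generalize (∫ x in Ω, 2 * q (t, x) * qt (t, x)) = Y at hE ⊢
      set e := exp (2 * A * t) with he
      have he0 : 0 < e := exp_pos _
      have he2 : e = exp (A * t) ^ 2 := by rw [he, ← exp_nat_mul]; congr 1; push_cast; ring
      have hM2 : e * m t ^ 2 ≤ (exp (A * τ) * m τ) ^ 2 := by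
        rw [he2, ← mul_pow]
        exact pow_le_pow_left₀ (by positivity) hM 2
      -- multiplied Nash inequality
      have h3 : (k + 1) * s ^ k * y t ≤ 2 * s ^ (k + 1) * D + 2 * κ ^ (N + 1) * m t ^ 2 := by
        have h4 : s ^ k * (2 * κ / C) * y t ≤ s ^ k * (2 * κ / C) * (C * (((s / κ) ^ N)⁻¹ * m t ^ 2 + s / κ * D)) :=
          mul_le_mul_of_nonneg_left hN (by positivity)
        have h5 : s ^ k * (2 * κ / C) * (C * (((s / κ) ^ N)⁻¹ * m t ^ 2 + s / κ * D))
            = 2 * κ ^ (N + 1) * (s ^ j * m t ^ 2) + 2 * s ^ (k + 1) * D := by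
          rw [hk, div_pow, inv_div]; field_simp; ring
        have h6 : s ^ j * m t ^ 2 ≤ m t ^ 2 := mul_le_of_le_one_left (sq_nonneg _) (pow_le_one₀ hs0.le hs1)
        have h7 : 2 * κ / C = k + 1 := by rw [hκ]; field_simp
        rw [h5, h7] at h4
        have : 2 * κ ^ (N + 1) * (s ^ j * m t ^ 2) ≤ 2 * κ ^ (N + 1) * m t ^ 2 :=
          mul_le_mul_of_nonneg_left h6 (by positivity)
        linarith
      have h8 : s ^ (k + 1) * e * (2 * D - 2 * A * y t) ≤ s ^ (k + 1) * e * Y :=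
        mul_le_mul_of_nonneg_left hE (by positivity)
      have h9 := mul_le_mul_of_nonneg_left h3 he0.le
      have h10 := mul_le_mul_of_nonneg_left hM2 (by positivity : 0 ≤ 2 * κ ^ (N + 1))
      push_cast
      rw [hB]
      nlinarith [h8, h9, h10]
  have h := key ⟨le_rfl, hτ.le⟩ ⟨hτ.le, le_rfl⟩ hτ.le
  simp only [sub_self, sub_zero, mul_zero, exp_zero, mul_one, add_zero] at h
  rw [zero_pow (by positivity)] at h
  have : B * τ ≤ B := mul_le_of_le_one_right hB0 hτ1
  simp only [zero_mul, zero_add] at h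
  exact h.trans this

end Obs

namespace Obs
open Filter Topology

variable {N : ℕ} {Ω : Set (EuclideanSpace ℝ (Fin N))} {η : EuclideanSpace ℝ (Fin N) → ℝ}
  {T A : ℝ} {q qt : ℝ × EuclideanSpace ℝ (Fin N) → ℝ}
  {P : ℝ × EuclideanSpace ℝ (Fin N) → EuclideanSpace ℝ (Fin N) →L[ℝ] ℝ}
  {H : ℝ × EuclideanSpace ℝ (Fin N) → EuclideanSpace ℝ (Fin N) →L[ℝ] EuclideanSpace ℝ (Fin N) →L[ℝ] ℝ}

lemma norm_grad (x : EuclideanSpace ℝ (Fin N)) : ‖gradient η x‖ = ‖fderiv ℝ η x‖ := by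
  simp [gradient]

lemma weight_ineq (G : Geo Ω η) (S : Sol Ω η T A q qt P H) {μ : ℝ} (hμ : 0 ≤ μ) {t : ℝ} (ht : t ∈ Ioo 0 T) :
    ∫ x in Ω, (q (t, x) * (exp (μ * η x) * (μ ^ 2 * ‖gradient η x‖ ^ 2 + μ * tr (fderiv ℝ (fderiv ℝ η) x)))
      - exp (μ * η x) * tr (H (t, x))) ≤ 0 := by
  have e1 : ∀ x, HasFDerivAt η (fderiv ℝ η x) x := fun x => (G.sm.differentiable two_ne_zero x).hasFDerivAt
  have c1 : ContDiff ℝ 1 (fderiv ℝ η) := G.sm.fderiv_right (by norm_num)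
  have e2 : ∀ x, HasFDerivAt (fderiv ℝ η) (fderiv ℝ (fderiv ℝ η) x) x :=
    fun x => (c1.differentiable one_ne_zero x).hasFDerivAt
  have c2 : Continuous (fderiv ℝ (fderiv ℝ η)) := c1.continuous_fderiv one_ne_zero
  have h1 : ∀ x, HasFDerivAt (fun x => exp (μ * η x)) ((exp (μ * η x) * μ) • fderiv ℝ η x) x := by
    intro x
    have := ((e1 x).const_mul μ).exp
    rwa [smul_smul] at this
  have h0 : ∀ x, HasFDerivAt (fun x => exp (μ * η x) * μ) ((μ ^ 2 * exp (μ * η x)) • fderiv ℝ η x) x := by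
    intro x
    have := (h1 x).mul_const μ
    rw [smul_smul] at this
    refine this.congr_fderiv ?_
    congr 1
    ring
  have h2 : ∀ x, HasFDerivAt (fun x => (exp (μ * η x) * μ) • fderiv ℝ η x)
      ((exp (μ * η x) * μ) • fderiv ℝ (fderiv ℝ η) x
        + ((μ ^ 2 * exp (μ * η x)) • fderiv ℝ η x).smulRight (fderiv ℝ η x)) x := fun x => (h0 x).smul (e2 x)
  have hηc : Continuous η := G.sm.continuous
  have c3 : Continuous (fun x => (exp (μ * η x) * μ) • fderiv ℝ (fderiv ℝ η) x
        + ((μ ^ 2 * exp (μ * η x)) • fderiv ℝ η x).smulRight (fderiv ℝ η x)) := by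
    rw [← continuousOn_univ]
    refine ContinuousOn.add ?_ (cont_smulRight ?_ c1.continuous.continuousOn)
    · exact ((by fun_prop : Continuous (fun x => exp (μ * η x) * μ)).smul c2).continuousOn
    · exact ((by fun_prop : Continuous (fun x => μ ^ 2 * exp (μ * η x))).smul c1.continuous).continuousOn
  have := weight_le G S ht h1 h2 c3 (fun x hx => by
    rw [_root_.smul_apply, ← dt_eq, dt_self, smul_eq_mul]
    positivity)
  convert this using 2
  ext x
  rw [tr_add, tr_smul, tr_smulRight]
  have : dt ((μ ^ 2 * exp (μ * η x)) • fderiv ℝ η x) (fderiv ℝ η x) = (μ ^ 2 * exp (μ * η x)) * ‖gradient η x‖ ^ 2 := by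
    rw [norm_grad, ← dt_self]; simp [dt, Finset.mul_sum, mul_assoc]
  rw [this]
  ring

lemma L1_obs (G : Geo Ω η) (S : Sol Ω η T A q qt P H) {ω₀ ω : Set (EuclideanSpace ℝ (Fin N))}
    (hω : MeasurableSet ω) (hωΩ : ω ⊆ Ω) (hω₀ : ω₀ ⊆ ω) {c K M μ σ t₀ : ℝ} (hc : 0 ≤ c) (hμ : 0 ≤ μ) (hσ : 0 ≤ σ)
    (hcb : ∀ x ∈ Ω \ ω₀, c ≤ ‖gradient η x‖) (hK : ∀ x ∈ Ω, |tr (fderiv ℝ (fderiv ℝ η) x)| ≤ K)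
    (hM : ∀ x ∈ Ω, η x ≤ M) (hK0 : 0 ≤ K)
    (h1 : A + σ + μ * K ≤ μ ^ 2 * c ^ 2) (ht₀ : t₀ ∈ Ico 0 T) (h2 : σ * (T - t₀) = A * (T - t₀) + μ * M + 1) :
    ∫ x in Ω, q (t₀, x) ≤ exp (A * (T - t₀) + μ * M + 1) * (A + σ + μ * K) * ∫ t in Ioo 0 T, ∫ x in ω, q (t, x) := by
  have hηc : Continuous η := G.sm.continuous
  have c1 : ContDiff ℝ 1 (fderiv ℝ η) := G.sm.fderiv_right (by norm_num)
  have c2 : Continuous (fderiv ℝ (fderiv ℝ η)) := c1.continuous_fderiv one_ne_zero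
  have hψ : Continuous (fun x => exp (μ * η x)) := by fun_prop
  have hA := S.hA
  set L := A + σ + μ * K with hL
  have hL0 : 0 ≤ L := by positivity
  set m : ℝ → ℝ := fun t => ∫ x in Ω, q (t, x) with hm
  set J : ℝ → ℝ := fun t => ∫ x in Ω, exp (μ * η x) * q (t, x) with hJ
  set O : ℝ → ℝ := fun t => ∫ x in ω, q (t, x) with hO
  have hTm : T ∈ Icc 0 T := ⟨ht₀.1.trans ht₀.2.le, le_rfl⟩
  have ht₀m : t₀ ∈ Icc 0 T := ⟨ht₀.1, ht₀.2.le⟩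
  have Oc : ContinuousOn O (Icc 0 T) := param_cont G S.qc hω hωΩ
  have O0 : ∀ t ∈ Icc 0 T, 0 ≤ O t := fun t ht => setIntegral_nonneg hω
    (fun x hx => S.q0 (t, x) ⟨ht, subset_closure (hωΩ hx)⟩)
  have hJc : ContinuousOn (fun p : ℝ × EuclideanSpace ℝ (Fin N) => exp (μ * η p.2) * q p) (Icc 0 T ×ˢ closure Ω) :=
    (hψ.comp continuous_snd).continuousOn.mul S.qc
  have hJt : ContinuousOn (fun p : ℝ × EuclideanSpace ℝ (Fin N) => exp (μ * η p.2) * qt p) (Ioo 0 T ×ˢ closure Ω) :=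
    (hψ.comp continuous_snd).continuousOn.mul S.qtc
  have Jd : ∀ t ∈ Ioo 0 T, HasDerivAt J (∫ x in Ω, exp (μ * η x) * qt (t, x)) t := fun t ht =>
    param_deriv G hJc (fun p hp => (S.qd p hp).const_mul (exp (μ * η p.2))) hJt ht
  have J_lo : m T ≤ J T := by
    apply setIntegral_mono_on (G.intOn (slice' hTm S.qc)) (G.intOn (slice' hTm hJc)) G.op.measurableSet
    intro x hx
    have := S.q0 (T, x) ⟨hTm, subset_closure hx⟩
    have h : 1 ≤ exp (μ * η x) := one_le_exp (mul_nonneg hμ (G.pos x hx).le)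
    nlinarith
  have J_hi : J t₀ ≤ exp (μ * M) * m t₀ := by
    rw [hm, ← integral_const_mul]
    apply setIntegral_mono_on (G.intOn (slice' ht₀m hJc)) ((G.intOn (slice' ht₀m S.qc)).const_mul _) G.op.measurableSet
    intro x hx
    have := S.q0 (t₀, x) ⟨ht₀m, subset_closure hx⟩
    have h : exp (μ * η x) ≤ exp (μ * M) := exp_le_exp.2 (mul_le_mul_of_nonneg_left (hM x hx) hμ)
    exact mul_le_mul_of_nonneg_right h this
  -- derivative bound
  have hder : ∀ t ∈ Ioo 0 T, σ * J t + (∫ x in Ω, exp (μ * η x) * qt (t, x)) ≤ exp (μ * M) * L * O t := by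
    intro t ht
    have ht' := Ioo_subset_Icc_self ht
    have hq := slice' ht' S.qc
    have hH := continuousOn_tr (slice ht S.Hc)
    have hηH : ContinuousOn (fun x => tr (fderiv ℝ (fderiv ℝ η) x)) (closure Ω) := continuousOn_tr c2.continuousOn
    have hg : ContinuousOn (fun x => ‖gradient η x‖) (closure Ω) := (continuous_gradient G).norm.continuousOn
    have i1 := G.intOn (slice' ht' hJc)
    have i2 := G.intOn (slice ht hJt)
    have i3 : IntegrableOn (fun x => q (t, x) * (exp (μ * η x) * (μ ^ 2 * ‖gradient η x‖ ^ 2 + μ * tr (fderiv ℝ (fderiv ℝ η) x)))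
      - exp (μ * η x) * tr (H (t, x))) Ω := by
      apply G.intOn
      exact (hq.mul (hψ.continuousOn.mul (((hg.pow 2).const_mul (μ ^ 2)).add (hηH.const_mul μ)))).sub (hψ.continuousOn.mul hH)
    have i4 : IntegrableOn (fun x => σ * (exp (μ * η x) * q (t, x)) + exp (μ * η x) * qt (t, x)) Ω :=
      (i1.const_mul σ).add i2
    have i5 : IntegrableOn (fun x => exp (μ * M) * L * q (t, x)) ω := ((G.intOn hq).mono_set hωΩ).const_mul _
    have hw := weight_ineq G S hμ ht
    have hle : ∫ x in Ω, ((σ * (exp (μ * η x) * q (t, x)) + exp (μ * η x) * qt (t, x)) -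
       (q (t, x) * (exp (μ * η x) * (μ ^ 2 * ‖gradient η x‖ ^ 2 + μ * tr (fderiv ℝ (fderiv ℝ η) x)))
      - exp (μ * η x) * tr (H (t, x)))) ≤ ∫ x in Ω, ω.indicator (fun x => exp (μ * M) * L * q (t, x)) x := by
      refine setIntegral_mono_on (i4.sub i3) ?_ G.op.measurableSet ?_
      · rw [integrableOn_indicator_iff hω, inter_eq_left.2 hωΩ]
        exact i5
      intro x hx
      have hq0 := S.q0 (t, x) ⟨ht', subset_closure hx⟩
      have he := le_of_abs_le (S.eq (t, x) ⟨ht, hx⟩)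
      have hk := neg_le_of_abs_le (hK x hx)
      have hψ0 := exp_pos (μ * η x)
      have hψM : exp (μ * η x) ≤ exp (μ * M) := exp_le_exp.2 (mul_le_mul_of_nonneg_left (hM x hx) hμ)
      have ha : (σ * (exp (μ * η x) * q (t, x)) + exp (μ * η x) * qt (t, x)) -
       (q (t, x) * (exp (μ * η x) * (μ ^ 2 * ‖gradient η x‖ ^ 2 + μ * tr (fderiv ℝ (fderiv ℝ η) x)))
      - exp (μ * η x) * tr (H (t, x))) ≤ exp (μ * η x) * q (t, x) * (L - μ ^ 2 * ‖gradient η x‖ ^ 2) := by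
        have b1 := mul_le_mul_of_nonneg_left he hψ0.le
        have b2 := mul_le_mul_of_nonneg_left hk (mul_nonneg (mul_nonneg hψ0.le hq0) hμ)
        rw [hL]
        linarith
      refine ha.trans ?_
      by_cases hxω : x ∈ ω
      · rw [indicator_of_mem hxω]
        calc exp (μ * η x) * q (t, x) * (L - μ ^ 2 * ‖gradient η x‖ ^ 2)
            ≤ exp (μ * η x) * q (t, x) * L :=
              mul_le_mul_of_nonneg_left (by linarith [(by positivity : 0 ≤ μ ^ 2 * ‖gradient η x‖ ^ 2)]) (mul_nonneg hψ0.le hq0)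
          _ = exp (μ * η x) * (q (t, x) * L) := by ring
          _ ≤ exp (μ * M) * (q (t, x) * L) := mul_le_mul_of_nonneg_right hψM (mul_nonneg hq0 hL0)
          _ = _ := by ring
      · rw [indicator_of_notMem hxω]
        have hg1 := hcb x ⟨hx, fun h => hxω (hω₀ h)⟩
        have hg2 : μ ^ 2 * c ^ 2 ≤ μ ^ 2 * ‖gradient η x‖ ^ 2 :=
          mul_le_mul_of_nonneg_left (pow_le_pow_left₀ hc hg1 2) (sq_nonneg _)
        exact mul_nonpos_of_nonneg_of_nonpos (mul_nonneg hψ0.le hq0) (by linarith)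
    rw [integral_sub i4 i3, integral_add (i1.const_mul σ) i2, integral_const_mul, setIntegral_indicator hω,
      inter_eq_right.2 hωΩ, integral_const_mul] at hle
    linarith
  have hsub : Icc t₀ T ⊆ Icc 0 T := Icc_subset_Icc_left ht₀.1
  have ftc := intervalIntegral.sub_le_integral_of_hasDeriv_right_of_le (a := t₀) (b := T)
    (g := fun t => exp (σ * t) * J t)
    (g' := fun t => exp (σ * t) * (σ * 1) * J t + exp (σ * t) * (∫ x in Ω, exp (μ * η x) * qt (t, x)))
    (φ := fun t => exp (σ * T) * (exp (μ * M) * L) * O t) ht₀.2.le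
    ((by fun_prop : Continuous fun t => exp (σ * t)).continuousOn.mul
      ((param_cont G hJc G.op.measurableSet subset_rfl).mono hsub))
    (fun t ht => ((((hasDerivAt_id t).const_mul σ).exp).mul (Jd t ⟨ht₀.1.trans_lt ht.1, ht.2⟩)).hasDerivWithinAt)
    (((Oc.mono hsub).const_mul _).integrableOn_compact isCompact_Icc)
    (fun t ht => by
      have ht' : t ∈ Ioo 0 T := ⟨ht₀.1.trans_lt ht.1, ht.2⟩
      have a1 := mul_le_mul_of_nonneg_left (hder t ht') (exp_pos (σ * t)).le
      have a2 : exp (σ * t) ≤ exp (σ * T) := exp_le_exp.2 (mul_le_mul_of_nonneg_left ht.2.le hσ)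
      have a3 : 0 ≤ exp (μ * M) * L * O t := mul_nonneg (mul_nonneg (exp_pos _).le hL0) (O0 t (Ioo_subset_Icc_self ht'))
      have a4 := mul_le_mul_of_nonneg_right a2 a3
      linarith)
  have hint : ∫ t in t₀..T, exp (σ * T) * (exp (μ * M) * L) * O t ≤ exp (σ * T) * (exp (μ * M) * L) * ∫ t in Ioo 0 T, O t := by
    rw [intervalIntegral.integral_const_mul, intervalIntegral.integral_of_le ht₀.2.le, integral_Ioc_eq_integral_Ioo]
    refine mul_le_mul_of_nonneg_left ?_ (by positivity)
    refine setIntegral_mono_set ((Oc.integrableOn_compact isCompact_Icc).mono_set Ioo_subset_Icc_self) ?_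
      (Ioo_subset_Ioo_left ht₀.1).eventuallyLE
    filter_upwards [ae_restrict_mem measurableSet_Ioo] with t ht using O0 t (Ioo_subset_Icc_self ht)
  have hmm := mass_mono G S ht₀m hTm ht₀.2.le
  change exp (A * t₀) * m t₀ ≤ exp (A * T) * m T at hmm
  change exp (σ * T) * J T - exp (σ * t₀) * J t₀ ≤ _ at ftc
  set I := ∫ t in Ioo 0 T, O t with hI
  have hm0 : 0 ≤ m t₀ := mass_nonneg S G ht₀m
  have hmm' : m t₀ ≤ exp (A * (T - t₀)) * m T := by
    have := mul_le_mul_of_nonneg_left hmm (exp_pos (- (A * t₀))).le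
    rw [← mul_assoc, ← mul_assoc, ← exp_add, ← exp_add] at this
    rw [show A * (T - t₀) = -(A * t₀) + A * T by ring]
    simpa using this
  have hE : exp (σ * t₀) * (exp (μ * M) * exp (A * (T - t₀))) = exp (σ * T) * exp (-1) := by
    rw [← exp_add, ← exp_add, ← exp_add]; congr 1; linarith
  have b1 : exp (σ * T) * m T ≤ exp (σ * T) * J T := mul_le_mul_of_nonneg_left J_lo (exp_pos _).le
  have b2 : exp (σ * t₀) * J t₀ ≤ exp (σ * T) * exp (-1) * m T := by
    rw [← hE]
    have := mul_le_mul_of_nonneg_left (J_hi.trans (mul_le_mul_of_nonneg_left hmm' (exp_pos (μ * M)).le)) (exp_pos (σ * t₀)).le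
    linarith
  have hmT : 0 ≤ m T := mass_nonneg S G hTm
  have b3 : exp (-1) ≤ 1 / 2 := by
    have : (2:ℝ) ≤ exp 1 := by linarith [add_one_le_exp (1:ℝ)]
    rw [exp_neg, ← one_div]
    exact one_div_le_one_div_of_le (by norm_num) this
  have b4 : exp (σ * T) * (m T * (1 / 2)) ≤ exp (σ * T) * (exp (μ * M) * L * I) := by
    have := mul_le_mul_of_nonneg_left b3 (mul_nonneg (exp_pos (σ * T)).le hmT)
    linarith
  have b5 := le_of_mul_le_mul_left b4 (exp_pos _)
  have b6 : m T ≤ exp 1 * (exp (μ * M) * L * I) := by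
    have : (2:ℝ) ≤ exp 1 := by linarith [add_one_le_exp (1:ℝ)]
    have h0 : 0 ≤ exp (μ * M) * L * I := by linarith
    nlinarith
  calc m t₀ ≤ exp (A * (T - t₀)) * m T := hmm'
    _ ≤ exp (A * (T - t₀)) * (exp 1 * (exp (μ * M) * L * I)) := mul_le_mul_of_nonneg_left b6 (exp_pos _).le
    _ = _ := by rw [exp_add, exp_add]; ring

end Obs

namespace Obs
open Filter Topology

variable {N : ℕ} {Ω : Set (EuclideanSpace ℝ (Fin N))} {η : EuclideanSpace ℝ (Fin N) → ℝ}
  {T A : ℝ} {q qt : ℝ × EuclideanSpace ℝ (Fin N) → ℝ}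
  {P : ℝ × EuclideanSpace ℝ (Fin N) → EuclideanSpace ℝ (Fin N) →L[ℝ] ℝ}
  {H : ℝ × EuclideanSpace ℝ (Fin N) → EuclideanSpace ℝ (Fin N) →L[ℝ] EuclideanSpace ℝ (Fin N) →L[ℝ] ℝ}

set_option maxHeartbeats 1000000 in
lemma obs (G : Geo Ω η) {ω₀ ω : Set (EuclideanSpace ℝ (Fin N))}
    (hω : MeasurableSet ω) (hωΩ : ω ⊆ Ω) (hω₀ : ω₀ ⊆ ω) (hgr : ∀ x ∈ closure (Ω \ ω₀), 0 < ‖gradient η x‖) :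
    ∃ C > (0:ℝ), ∀ (T A : ℝ) (q qt : ℝ × EuclideanSpace ℝ (Fin N) → ℝ)
    (P : ℝ × EuclideanSpace ℝ (Fin N) → EuclideanSpace ℝ (Fin N) →L[ℝ] ℝ)
    (H : ℝ × EuclideanSpace ℝ (Fin N) → EuclideanSpace ℝ (Fin N) →L[ℝ] EuclideanSpace ℝ (Fin N) →L[ℝ] ℝ),
    0 < T → Sol Ω η T A q qt P H →
    ∫ x in Ω, q (0, x) ^ 2 ≤ exp (C * (1 + 1 / T + T * A + √A)) * (∫ t in Ioo 0 T, ∫ x in ω, q (t, x)) ^ 2 := by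
  obtain ⟨c, hc, hcb⟩ : ∃ c > (0:ℝ), ∀ x ∈ Ω \ ω₀, c ≤ ‖gradient η x‖ := by
    have hcp : IsCompact (closure (Ω \ ω₀)) := (G.bd.subset sdiff_subset).isCompact_closure
    rcases (closure (Ω \ ω₀)).eq_empty_or_nonempty with he | hne
    · exact ⟨1, one_pos, fun x hx => by have := subset_closure hx; rw [he] at this; exact this.elim⟩
    · obtain ⟨x₀, hx₀, hmin⟩ := hcp.exists_isMinOn hne (continuous_gradient G).norm.continuousOn
      exact ⟨_, hgr x₀ hx₀, fun x hx => hmin (subset_closure hx)⟩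
  have c1 : ContDiff ℝ 1 (fderiv ℝ η) := G.sm.fderiv_right (by norm_num)
  have c2 : Continuous (fderiv ℝ (fderiv ℝ η)) := c1.continuous_fderiv one_ne_zero
  obtain ⟨K, hK0, hK⟩ : ∃ K, 0 ≤ K ∧ ∀ x ∈ Ω, |tr (fderiv ℝ (fderiv ℝ η) x)| ≤ K := by
    obtain ⟨K, hK⟩ := G.cpt.exists_bound_of_continuousOn (continuousOn_tr (s := closure Ω) c2.continuousOn)
    exact ⟨max K 0, le_max_right _ _, fun x hx => (hK x (subset_closure hx)).trans (le_max_left _ _)⟩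
  obtain ⟨M, hM0, hM⟩ : ∃ M, 0 ≤ M ∧ ∀ x ∈ Ω, η x ≤ M := by
    obtain ⟨K, hK⟩ := G.cpt.exists_bound_of_continuousOn G.sm.continuous.continuousOn
    exact ⟨max K 0, le_max_right _ _, fun x hx => (le_abs_self _).trans ((hK x (subset_closure hx)).trans (le_max_left _ _))⟩
  obtain ⟨C, hC, k, hsm⟩ := smoothing G
  set C1 : ℝ := 1 + (K + M + 3) / c ^ 2 with hC1
  have hC11 : 1 ≤ C1 := by rw [hC1]; linarith [(by positivity : 0 ≤ (K + M + 3) / c ^ 2)]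
  have hC12 : K + M + 3 ≤ C1 * c ^ 2 := by
    rw [hC1, add_mul, div_mul_cancel₀ _ (by positivity)]; nlinarith [sq_nonneg c]
  refine ⟨C + 2 * k + 4 + 4 * C1 * (M + 2 * c), by positivity, ?_⟩
  intro T A q qt P H hT S
  have hA := S.hA
  set τ := min 1 (T / 2) with hτ
  have hτ0 : 0 < τ := by rw [hτ]; positivity
  have hτ1 : τ ≤ 1 := min_le_left _ _
  have hτ2 : τ ≤ T / 2 := min_le_right _ _
  have hτi : 1 / τ ≤ 1 + 2 / T := by
    rcases min_choice 1 (T / 2) with h | h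
    · rw [hτ, h]; have : 0 < 2 / T := by positivity
      norm_num; linarith
    · rw [hτ, h, one_div_div]; linarith
  set d := T - τ with hd
  have hd1 : T / 2 ≤ d := by rw [hd]; linarith
  have hd0 : 0 < d := by linarith
  have hdi : 1 / d ≤ 2 / T := by rw [← one_div_div T 2]; exact one_div_le_one_div_of_le (by positivity) hd1
  set X := 1 + √A + 1 / d with hX
  have hs0 := sqrt_nonneg A
  have hdp : 0 < 1 / d := by positivity
  have hX1 : 1 ≤ X := by rw [hX]; linarith
  have hXX : X ≤ X ^ 2 := by nlinarith
  have hXd : 1 / d ≤ X := by rw [hX]; linarith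
  have hXA : A ≤ X ^ 2 := by
    have : √A ≤ X := by rw [hX]; linarith
    calc A = √A ^ 2 := (sq_sqrt hA).symm
      _ ≤ X ^ 2 := pow_le_pow_left₀ hs0 this 2
  set μ := C1 * X with hμ
  have hμ0 : 0 ≤ μ := by positivity
  set σ := A + (μ * M + 1) * (1 / d) with hσ
  have hσ0 : 0 ≤ σ := by positivity
  have hμc : A + σ + μ * K ≤ μ ^ 2 * c ^ 2 := by
    have e1 : μ * M * (1 / d) ≤ C1 * M * X ^ 2 := by
      rw [hμ]; nlinarith [mul_le_mul_of_nonneg_left hXd (by positivity : 0 ≤ C1 * X * M)]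
    have e2 : X ^ 2 ≤ C1 * X ^ 2 := le_mul_of_one_le_left (sq_nonneg _) hC11
    have e3 : μ * K ≤ C1 * K * X ^ 2 := by
      rw [hμ]; nlinarith [mul_le_mul_of_nonneg_left hXX (by positivity : 0 ≤ C1 * K)]
    have e4 : C1 * X ^ 2 * (K + M + 3) ≤ C1 * X ^ 2 * (C1 * c ^ 2) := mul_le_mul_of_nonneg_left hC12 (by positivity)
    have e5 : μ ^ 2 * c ^ 2 = C1 * X ^ 2 * (C1 * c ^ 2) := by rw [hμ]; ring
    rw [e5, hσ]
    linarith
  have hL := L1_obs G S hω hωΩ hω₀ hc.le hμ0 hσ0 hcb hK hM hK0 hμc (t₀ := τ) ⟨hτ0.le, by linarith⟩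
    (by rw [← hd, hσ]; field_simp; ring)
  rw [← hd] at hL
  have hm0 := mass_nonneg S G (t := τ) ⟨hτ0.le, by linarith⟩
  have hS := hsm T A q qt P H S τ hτ0 hτ1 (by linarith)
  set I := ∫ t in Ioo 0 T, ∫ x in ω, q (t, x) with hI
  have hI0 : 0 ≤ I := setIntegral_nonneg measurableSet_Ioo (fun t ht => setIntegral_nonneg hω
    (fun x hx => S.q0 (t, x) ⟨Ioo_subset_Icc_self ht, subset_closure (hωΩ hx)⟩))
  generalize (∫ x in Ω, q (τ, x)) = m at hL hm0 hS
  generalize (∫ x in Ω, q (0, x) ^ 2) = y at hS ⊢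
  have hAd : A * d ≤ T * A := by rw [hd]; have := mul_nonneg hA hτ0.le; linarith
  have hm1 : m ≤ exp (T * A + μ * M + 1 + 2 * (μ * c)) * I := by
    have f1 : A + σ + μ * K ≤ exp (2 * (μ * c)) := by
      refine hμc.trans ?_
      have : μ * c ≤ exp (μ * c) := by linarith [add_one_le_exp (μ * c)]
      have := pow_le_pow_left₀ (by positivity) this 2
      rw [← exp_nat_mul] at this
      rw [← mul_pow]; exact_mod_cast this
    refine hL.trans (mul_le_mul_of_nonneg_right ?_ hI0)
    rw [exp_add _ (2 * (μ * c))]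
    exact mul_le_mul (exp_le_exp.2 (by linarith)) f1 (by positivity) (exp_pos _).le
  have hτk : 1 ≤ exp (k * (1 + 2 / T)) * τ ^ k := by
    have g1 : 1 ≤ exp (1 / τ) * τ := by
      have : 1 / τ ≤ exp (1 / τ) := by linarith [add_one_le_exp (1 / τ)]
      have := mul_le_mul_of_nonneg_right this hτ0.le
      rwa [one_div_mul_cancel hτ0.ne'] at this
    have g2 : 1 ≤ exp (1 + 2 / T) * τ := g1.trans (mul_le_mul_of_nonneg_right (exp_le_exp.2 hτi) hτ0.le)
    have := one_le_pow₀ g2 (n := k)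
    rwa [mul_pow, ← exp_nat_mul] at this
  have hCe : C ≤ exp C := by linarith [add_one_le_exp C]
  set Z := exp (A * τ) * m with hZ
  have hZ0 : 0 ≤ Z := by positivity
  have hZ1 : Z ≤ exp (2 * (T * A) + μ * M + 1 + 2 * (μ * c)) * I := by
    have : A * τ ≤ T * A := by rw [mul_comm T]; exact mul_le_mul_of_nonneg_left (by linarith) hA
    have h := mul_le_mul (exp_le_exp.2 this) hm1 hm0 (exp_pos _).le
    rw [← mul_assoc, ← exp_add] at h
    refine h.trans_eq ?_
    congr 2
    ring
  have hZ2 : Z ^ 2 ≤ exp (2 * (2 * (T * A) + μ * M + 1 + 2 * (μ * c))) * I ^ 2 := by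
    refine (pow_le_pow_left₀ hZ0 hZ1 2).trans_eq ?_
    rw [mul_pow, ← exp_nat_mul]
    norm_num
  have hy : y ≤ exp (k * (1 + 2 / T)) * (exp C * Z ^ 2) := by
    by_cases hy0 : 0 ≤ y
    · calc y = 1 * y := (one_mul y).symm
        _ ≤ exp (k * (1 + 2 / T)) * τ ^ k * y := mul_le_mul_of_nonneg_right hτk hy0
        _ = exp (k * (1 + 2 / T)) * (τ ^ k * y) := by ring
        _ ≤ exp (k * (1 + 2 / T)) * (exp C * Z ^ 2) := mul_le_mul_of_nonneg_left
          (hS.trans (mul_le_mul_of_nonneg_right hCe (sq_nonneg _))) (exp_pos _).le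
    · have : 0 ≤ exp (k * (1 + 2 / T)) * (exp C * Z ^ 2) := by positivity
      linarith
  have hfin : y ≤ exp (k * (1 + 2 / T)) * (exp C * (exp (2 * (2 * (T * A) + μ * M + 1 + 2 * (μ * c))) * I ^ 2)) :=
    hy.trans (mul_le_mul_of_nonneg_left (mul_le_mul_of_nonneg_left hZ2 (exp_pos _).le) (exp_pos _).le)
  rw [← mul_assoc, ← mul_assoc, ← exp_add, ← exp_add] at hfin
  refine hfin.trans (mul_le_mul_of_nonneg_right (exp_le_exp.2 ?_) (sq_nonneg _))
  set R := 1 + 1 / T + T * A + √A with hR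
  have hTi : 0 < 1 / T := by positivity
  have hTi2 : 2 / T = 2 * (1 / T) := by ring
  have hTA : 0 ≤ T * A := by positivity
  have hR1 : 1 ≤ R := by linarith
  have r1 : (k:ℝ) * (1 + 2 / T) ≤ k * (2 * R) := mul_le_mul_of_nonneg_left (by linarith) (Nat.cast_nonneg k)
  have r2 : C ≤ C * R := le_mul_of_one_le_right hC.le hR1
  have hXR : X ≤ 2 * R := by linarith
  have r3 : C1 * (M + 2 * c) * X ≤ C1 * (M + 2 * c) * (2 * R) := mul_le_mul_of_nonneg_left hXR (by positivity)
  have r4 : 4 * (T * A) + 2 ≤ 4 * R := by linarith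
  have r5 : μ * M + 2 * (μ * c) = C1 * (M + 2 * c) * X := by rw [hμ]; ring
  linarith

lemma continuousOn_tr' {X : Type*} [TopologicalSpace X] {s : Set X}
    {F : X → EuclideanSpace ℝ (Fin N) →L[ℝ] EuclideanSpace ℝ (Fin N) →L[ℝ] ℝ} (hF : ContinuousOn F s) :
    ContinuousOn (fun x => tr (F x)) s := by
  unfold tr; fun_prop

lemma lap_eq {f : EuclideanSpace ℝ (Fin N) → ℝ} {x : EuclideanSpace ℝ (Fin N)}
    (h : DifferentiableAt ℝ (fun y => fderiv ℝ f y) x) :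
    spaceLaplacian f x = tr (fderiv ℝ (fun y => fderiv ℝ f y) x) := by
  unfold spaceLaplacian tr
  refine Finset.sum_congr rfl (fun i _ => ?_)
  have := (h.hasFDerivAt.clm_apply (hasFDerivAt_const (EuclideanSpace.single i (1:ℝ)) x)).fderiv
  rw [this]
  simp

lemma ae_to_all {X : Type*} [TopologicalSpace X] [MeasurableSpace X] [OpensMeasurableSpace X] (ν : Measure X) [ν.IsOpenPosMeasure] {U : Set X} (hU : IsOpen U) {f g : X → ℝ}
    (hf : ContinuousOn f U) (hg : ContinuousOn g U) (h : ∀ᵐ x ∂(ν.restrict U), f x ≤ g x) : ∀ x ∈ U, f x ≤ g x := by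
  by_contra! hcon
  obtain ⟨x, hx, hlt⟩ := hcon
  have hV : IsOpen (U ∩ (fun x => f x - g x) ⁻¹' Ioi 0) := (hf.sub hg).isOpen_inter_preimage hU isOpen_Ioi
  have hpos := hV.measure_pos ν ⟨x, hx, by simpa using hlt⟩
  rw [ae_restrict_iff' hU.measurableSet, ae_iff] at h
  refine hpos.ne' (measure_mono_null ?_ h)
  rintro z ⟨hz, hz2⟩
  simp only [mem_preimage, mem_Ioi, sub_pos] at hz2
  simpa using ⟨hz, hz2⟩

end Obs

theorem observability_L2_L1_neumann
    (N : ℕ) (hN : 1 ≤ N)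
    (Ω ω₀ ω : Set (EuclideanSpace ℝ (Fin N)))
    (hΩo : IsOpen Ω) (hΩb : Bornology.IsBounded Ω) (hΩc : IsConnected Ω)
    (hω₀o : IsOpen ω₀) (hω₀ne : ω₀.Nonempty) (hωo : IsOpen ω) (hωne : ω.Nonempty)
    (hω₀ω : closure ω₀ ⊆ ω) (hωΩ : ω ⊆ Ω)
    (η : EuclideanSpace ℝ (Fin N) → ℝ) (hη : ContDiff ℝ 2 η)
    (hηpos : ∀ x ∈ Ω, 0 < η x) (hηbd : ∀ x ∈ frontier Ω, η x = 0)
    (hηgrad : ∀ x ∈ closure (Ω \ ω₀), 0 < ‖gradient η x‖) :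
    ∃ C > (0:ℝ),
      ∀ T : ℝ, 0 < T →
      ∀ a : ℝ × EuclideanSpace ℝ (Fin N) → ℝ, Measurable a →
      (∃ B : ℝ, ∀ p ∈ Set.Ioo (0:ℝ) T ×ˢ Ω, |a p| ≤ B) →
      ∀ q qt : ℝ × EuclideanSpace ℝ (Fin N) → ℝ,
        ContinuousOn q (Set.Icc 0 T ×ˢ closure Ω) →
        (∀ p ∈ Set.Icc 0 T ×ˢ closure Ω, 0 ≤ q p) →
        (∀ p ∈ Set.Ioo 0 T ×ˢ closure Ω,
          HasDerivAt (fun τ => q (τ, p.2)) (qt p) p.1) →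
        ContinuousOn qt (Set.Ioo 0 T ×ˢ closure Ω) →
        (∀ p ∈ Set.Ioo 0 T ×ˢ closure Ω,
          DifferentiableAt ℝ (fun z => q (p.1, z)) p.2) →
        (∀ p ∈ Set.Ioo 0 T ×ˢ closure Ω,
          DifferentiableAt ℝ (fun y => fderiv ℝ (fun z => q (p.1, z)) y) p.2) →
        ContinuousOn (fun p : ℝ × EuclideanSpace ℝ (Fin N) =>
          fderiv ℝ (fun z => q (p.1, z)) p.2) (Set.Ioo 0 T ×ˢ closure Ω) →
        ContinuousOn (fun p : ℝ × EuclideanSpace ℝ (Fin N) =>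
          fderiv ℝ (fun y => fderiv ℝ (fun z => q (p.1, z)) y) p.2)
          (Set.Ioo 0 T ×ˢ closure Ω) →
        (∀ t ∈ Set.Ioo (0:ℝ) T, ∀ x ∈ Ω,
          -qt (t, x) - spaceLaplacian (fun z => q (t, z)) x
            + a (t, x) * q (t, x) = 0) →
        (∀ t ∈ Set.Ioo (0:ℝ) T, ∀ x ∈ frontier Ω,
          ⟪gradient (fun z => q (t, z)) x, gradient η x⟫ = 0) →
        (∫ x in Ω, q (0, x) ^ 2)
          ≤ Real.exp (C * (1 + 1/T + T * (eLpNorm a ⊤ (volume.restrict (Set.Ioo (0:ℝ) T ×ˢ Ω))).toReal + Real.sqrt (eLpNorm a ⊤ (volume.restrict (Set.Ioo (0:ℝ) T ×ˢ Ω))).toReal)) *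
            (∫ t in Set.Ioo (0:ℝ) T, ∫ x in ω, q (t, x)) ^ 2 := by
  have G : Obs.Geo Ω η := by
    refine ⟨hΩo, hΩb, hη, hηpos, hηbd, fun x hx => hηgrad x ?_⟩
    have hxΩ : x ∉ Ω := by
      rw [hΩo.frontier_eq] at hx; exact hx.2
    have hx0 : x ∈ (closure ω₀)ᶜ := fun h => hxΩ (hωΩ (hω₀ω h))
    rw [_root_.mem_closure_iff]
    intro o ho hxo
    obtain ⟨z, ⟨hz1, hz2⟩, hz3⟩ := _root_.mem_closure_iff.1 (frontier_subset_closure hx) (o ∩ (closure ω₀)ᶜ)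
      (ho.inter isClosed_closure.isOpen_compl) ⟨hxo, hx0⟩
    exact ⟨z, hz1, hz3, fun h => hz2 (subset_closure h)⟩
  obtain ⟨C, hC, hmain⟩ := Obs.obs G hωo.measurableSet hωΩ (subset_closure.trans hω₀ω) hηgrad
  refine ⟨C, hC, ?_⟩
  intro T hT a ham hab q qt hqc hq0 hqd hqtc hd1 hd2 hc1 hc2 heq hnm
  set U : Set (ℝ × EuclideanSpace ℝ (Fin N)) := Ioo (0:ℝ) T ×ˢ Ω with hU
  have hUo : IsOpen U := isOpen_Ioo.prod hΩo
  have hUc : U ⊆ Ioo 0 T ×ˢ closure Ω := prod_mono subset_rfl subset_closure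
  have hUc' : U ⊆ Icc 0 T ×ˢ closure Ω := prod_mono Ioo_subset_Icc_self subset_closure
  refine hmain T (eLpNorm a ⊤ (volume.restrict U)).toReal q qt (fun p => fderiv ℝ (fun z => q (p.1, z)) p.2)
    (fun p => fderiv ℝ (fun y => fderiv ℝ (fun z => q (p.1, z)) y) p.2) hT ?_
  have haf : eLpNorm a ⊤ (volume.restrict U) < ⊤ := by
    obtain ⟨B, hB⟩ := hab
    refine (memLp_top_of_bound ham.aestronglyMeasurable B ?_).2
    filter_upwards [ae_restrict_mem hUo.measurableSet] with p hp using hB p hp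
  have hae : ∀ᵐ p ∂(volume.restrict U), |a p| ≤ (eLpNorm a ⊤ (volume.restrict U)).toReal := by
    have := ae_le_eLpNormEssSup (f := a) (μ := volume.restrict U)
    filter_upwards [this] with p hp
    rw [eLpNorm_exponent_top] at haf ⊢
    have := ENNReal.toReal_mono haf.ne hp
    simpa using this
  refine ⟨ENNReal.toReal_nonneg, hqc, hq0, hqd, hqtc, fun p hp => (hd1 p hp).hasFDerivAt,
    fun p hp => (hd2 p hp).hasFDerivAt, hc1, hc2, ?_, ?_⟩
  · have hqU := hqc.mono hUc'
    have hF : ContinuousOn (fun p => |qt p + Obs.tr (fderiv ℝ (fun y => fderiv ℝ (fun z => q (p.1, z)) y) p.2)|) U :=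
      ((hqtc.mono hUc).add (Obs.continuousOn_tr' (hc2.mono hUc))).abs
    refine Obs.ae_to_all volume hUo hF (hqU.const_mul _) ?_
    filter_upwards [hae, ae_restrict_mem hUo.measurableSet] with p hp hpU
    have h1 := heq p.1 hpU.1 p.2 hpU.2
    rw [Obs.lap_eq (hd2 p (hUc hpU))] at h1
    have h2 : qt p + Obs.tr (fderiv ℝ (fun y => fderiv ℝ (fun z => q (p.1, z)) y) p.2) = a p * q p := by
      linarith
    rw [h2, abs_mul, abs_of_nonneg (hq0 p (hUc' hpU))]
    exact mul_le_mul_of_nonneg_right hp (hq0 p (hUc' hpU))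
  · intro t ht x hx
    have := hnm t ht x hx
    rw [gradient, InnerProductSpace.toDual_symm_apply] at this
    exact this
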